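/- arXiv:1706.09675 — 2 statements merged into one kernel-verified Lean document; each statement's English description precedes it below -/
import Mathlib

section
/- Let R = k[x_1,…,x_n] be a polynomial ring over a field k, let I ⊆ R be a monomial ideal, and let f ∈ R be any monomial. Then reg R/I ≥ reg R/(I:f). -/
open MvPolynomial

/-- The depth of the `R`-module `M` with respect to the ideal `J`: the supremum of
lengths of `M`-regular sequences consisting of elements of `J`. -/
noncomputable def idealDepth {R : Type*} [CommRing R] (J : Ideal R)
    (M : Type*) [AddCommGroup M] [Module R M] : ℕ :=
  sSup {d : ℕ | ∃ rs : List R, rs.length = d ∧ (∀ r ∈ rs, r ∈ J) ∧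
    RingTheory.Sequence.IsRegular M rs}

/-- The irrelevant maximal homogeneous ideal `(x₁, …, xₙ)` of the polynomial ring. -/
noncomputable def mxIdeal (k : Type*) [Field k] (n : ℕ) : Ideal (MvPolynomial (Fin n) k) :=
  Ideal.span (Set.range MvPolynomial.X)

/-- `depth R/I`, the depth of the quotient module with respect to the maximal
homogeneous ideal. -/
noncomputable def pdepth {k : Type*} [Field k] {n : ℕ}
    (I : Ideal (MvPolynomial (Fin n) k)) : ℕ :=
  idealDepth (mxIdeal k n) (MvPolynomial (Fin n) k ⧸ I)

/-- `p` is homogeneous of degree `d ∈ ℤ` (where `0` is homogeneous of any degree). -/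
def HomogOfDeg {k : Type*} [Field k] {n : ℕ} (p : MvPolynomial (Fin n) k) (d : ℤ) : Prop :=
  p = 0 ∨ ∃ m : ℕ, (m : ℤ) = d ∧ p.IsHomogeneous m

/-- A finite graded free resolution of `R/I`: free modules `Fᵢ = ⊕_j R(-D i j)` (of rank
`b i`, zero for `i > len`), differentials given by matrices `A i : Fᵢ₊₁ → Fᵢ` whose entries
are homogeneous of the appropriate degrees, and an augmentation `F₀ → R/I` given by the
homogeneous column `v`, the whole complex being exact. -/
structure GradedFreeRes {k : Type*} [Field k] {n : ℕ}
    (I : Ideal (MvPolynomial (Fin n) k)) where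
  len : ℕ
  b : ℕ → ℕ
  hb : ∀ i : ℕ, len < i → b i = 0
  D : (i : ℕ) → Fin (b i) → ℤ
  A : (i : ℕ) → Matrix (Fin (b i)) (Fin (b (i+1))) (MvPolynomial (Fin n) k)
  v : Fin (b 0) → MvPolynomial (Fin n) k
  hv : ∀ r, HomogOfDeg (v r) (D 0 r)
  hA : ∀ (i : ℕ) r c, HomogOfDeg (A i r c) (D (i+1) c - D i r)
  haug : Function.Surjective
    (fun w : Fin (b 0) → MvPolynomial (Fin n) k => Ideal.Quotient.mk I (∑ r, w r * v r))
  hex0 : Function.Exact ((A 0).mulVec)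
    (fun w : Fin (b 0) → MvPolynomial (Fin n) k => Ideal.Quotient.mk I (∑ r, w r * v r))
  hex : ∀ i : ℕ, Function.Exact ((A (i+1)).mulVec) ((A i).mulVec)

/-- The Castelnuovo–Mumford regularity `reg R/I`: the least `r` such that some finite
graded free resolution of `R/I` has all its `i`-th twists `≤ r + i`; equivalently (via the
minimal free resolution) `reg R/I = max { j - i : β_{i,j}(R/I) ≠ 0 }`. -/
noncomputable def regQuot {k : Type*} [Field k] {n : ℕ}
    (I : Ideal (MvPolynomial (Fin n) k)) : ℤ :=
  sInf {r : ℤ | ∃ F : GradedFreeRes I, ∀ (i : ℕ) (j : Fin (F.b i)), F.D i j - (i : ℤ) ≤ r}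

/-- The regularity of a (nonzero) homogeneous ideal: `reg I = reg R/I + 1`. -/
noncomputable def regIdeal {k : Type*} [Field k] {n : ℕ}
    (I : Ideal (MvPolynomial (Fin n) k)) : ℤ :=
  regQuot I + 1

/-- An ideal is homogeneous if it is generated by homogeneous polynomials. -/
def IsHomogeneousIdeal {k : Type*} [Field k] {n : ℕ}
    (I : Ideal (MvPolynomial (Fin n) k)) : Prop :=
  ∃ T : Set (MvPolynomial (Fin n) k), (∀ p ∈ T, ∃ d : ℕ, p.IsHomogeneous d) ∧ I = Ideal.span T

/-- A monomial ideal: an ideal generated by monomials. -/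
def IsMonomialIdeal {k : Type*} [Field k] {n : ℕ}
    (I : Ideal (MvPolynomial (Fin n) k)) : Prop :=
  ∃ T : Set (Fin n →₀ ℕ), I = Ideal.span ((fun m => monomial m (1 : k)) '' T)

/-!
Write `I = (x ^ g | g ∈ U)` and `f = x ^ m`. A multigraded free resolution of `R / I` amounts to a
complex of vector spaces with a basis whose elements `j` carry multidegrees `mdeg j`, such that for
each `b` the subcomplex spanned by the `j` with `mdeg j ≤ b` resolves the degree `b` part of
`R / I`. Since `x ^ b ∈ I : f` exactly when `x ^ (b + m) ∈ I`, and `mdeg j ≤ b + m` exactly when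
`mdeg j - m ≤ b` (truncated subtraction), replacing `mdeg j` by `mdeg j - m` turns it into a
resolution of `R / (I : f)`, in which no twist has increased.

Iterated mapping cones provide a multigraded resolution, and cancelling unit entries of the
differential makes it minimal. Comparison maps show that the twists of a minimal resolution occur in
every resolution, so it computes the regularity.
-/

/-! ### Gaussian elimination in a differential -/

section Pivot

variable {ι k : Type*} [Fintype ι] [DecidableEq ι] [Field k] {A : Matrix ι ι k} {p q : ι}

/-- The homotopy inverting the entry `A p q` of a differential `A`; it contracts the summand of the
complex that is cancelled by Gaussian elimination at this entry. -/
def pivotHomotopy (A : Matrix ι ι k) (p q : ι) : Matrix ι ι k :=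
  Matrix.single q p (A p q)⁻¹

/-- The inclusion, as a subcomplex, of the complement of the summand contracted by
`pivotHomotopy A p q`. -/
def pivotInc (A : Matrix ι ι k) (p q : ι) : Matrix ι {j // j ≠ p ∧ j ≠ q} k :=
  (1 - pivotHomotopy A p q * A).submatrix id Subtype.val

/-- The projection onto the complement of the summand contracted by `pivotHomotopy A p q`. -/
def pivotProj (A : Matrix ι ι k) (p q : ι) : Matrix {j // j ≠ p ∧ j ≠ q} ι k :=
  (1 - A * pivotHomotopy A p q).submatrix Subtype.val id

theorem pivotHomotopy_mul_apply (A : Matrix ι ι k) (p q i j : ι) :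
    (pivotHomotopy A p q * A) i j = if i = q then (A p q)⁻¹ * A p j else 0 := by
  split_ifs with h
  · rw [h, pivotHomotopy, Matrix.single_mul_apply_same]
  · exact Matrix.single_mul_apply_of_ne _ _ _ _ _ h _

theorem mul_pivotHomotopy_apply (A : Matrix ι ι k) (p q i j : ι) :
    (A * pivotHomotopy A p q) i j = if j = p then A i q * (A p q)⁻¹ else 0 := by
  split_ifs with h
  · rw [h, pivotHomotopy, Matrix.mul_single_apply_same]
  · exact Matrix.mul_single_apply_of_ne _ _ _ _ _ h _

theorem pivotProj_mul_pivotInc (A : Matrix ι ι k) (hpq : p ≠ q) :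
    pivotProj A p q * pivotInc A p q = 1 := by
  have hsq : pivotHomotopy A p q * pivotHomotopy A p q = 0 :=
    Matrix.single_mul_single_of_ne _ _ _ _ hpq _
  have hmul : (1 - A * pivotHomotopy A p q) * (1 - pivotHomotopy A p q * A) =
      1 - A * pivotHomotopy A p q - pivotHomotopy A p q * A :=
    calc _ = 1 - A * pivotHomotopy A p q - pivotHomotopy A p q * A +
          A * (pivotHomotopy A p q * pivotHomotopy A p q) * A := by noncomm_ring
      _ = _ := by simp [hsq]
  ext s t
  rw [pivotProj, pivotInc, ← Matrix.submatrix_mul _ _ _ _ _ Function.bijective_id, hmul]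
  simp [pivotHomotopy_mul_apply, mul_pivotHomotopy_apply, t.2.1, s.2.2, Matrix.one_apply,
    Subtype.ext_iff]

theorem pivotInc_mul_pivotProj (hpq : A p q ≠ 0) (hA : A * A = 0) :
    pivotInc A p q * pivotProj A p q =
      1 - pivotHomotopy A p q * A - A * pivotHomotopy A p q := by
  have hmul : (1 - pivotHomotopy A p q * A) * (1 - A * pivotHomotopy A p q) =
      1 - pivotHomotopy A p q * A - A * pivotHomotopy A p q :=
    calc _ = 1 - pivotHomotopy A p q * A - A * pivotHomotopy A p q +
          pivotHomotopy A p q * (A * A) * pivotHomotopy A p q := by noncomm_ring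
      _ = _ := by simp [hA]
  have hcol (i : ι) : (1 - pivotHomotopy A p q * A) i q = 0 := by
    simp [pivotHomotopy_mul_apply, Matrix.one_apply, hpq]
  have hrow (j : ι) : (1 - A * pivotHomotopy A p q) p j = 0 := by
    simp [mul_pivotHomotopy_apply, Matrix.one_apply, hpq, eq_comm]
  rw [← hmul]
  ext i j
  refine Fintype.sum_of_injective Subtype.val Subtype.val_injective _ _ (fun s hs => ?_)
    fun _ => rfl
  obtain rfl | rfl : s = p ∨ s = q := by
    simpa [or_iff_not_imp_left] using hs
  · simp only [hrow, mul_zero]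
  · simp only [hcol, zero_mul]

theorem commute_pivotInc_mul_pivotProj (hpq : A p q ≠ 0) (hA : A * A = 0) :
    Commute (pivotInc A p q * pivotProj A p q) A := by
  rw [pivotInc_mul_pivotProj hpq hA, commute_iff_eq]
  simp only [sub_mul, mul_sub, mul_assoc, hA, ← mul_assoc A A]
  simp

theorem pivotInc_apply_ne_zero {i : ι} {s : {j // j ≠ p ∧ j ≠ q}}
    (h : pivotInc A p q i s ≠ 0) : i = s ∨ i = q ∧ A p s ≠ 0 := by
  contrapose! h
  simpa [pivotInc, pivotHomotopy_mul_apply, Matrix.one_apply, h.1] using fun hi => .inr (h.2 hi)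

theorem pivotProj_apply_ne_zero {s : {j // j ≠ p ∧ j ≠ q}} {i : ι}
    (h : pivotProj A p q s i ≠ 0) : s = i ∨ i = p ∧ A s q ≠ 0 := by
  contrapose! h
  simpa [pivotProj, mul_pivotHomotopy_apply, Matrix.one_apply, h.1] using fun hi => .inl (h.2 hi)

end Pivot

/-! ### Matrices and exact sequences -/

section Matrices

open scoped Matrix

variable {ι κ μ ν R : Type*}

theorem exists_ne_zero_of_mulVec_ne_zero [NonUnitalNonAssocSemiring R] [Fintype κ]
    {M : Matrix ι κ R} {w : κ → R} {i : ι} (h : (M *ᵥ w) i ≠ 0) :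
    ∃ j, M i j ≠ 0 ∧ w j ≠ 0 := by
  obtain ⟨j, -, hj⟩ := Finset.exists_ne_zero_of_sum_ne_zero h
  exact ⟨j, left_ne_zero_of_mul hj, right_ne_zero_of_mul hj⟩

theorem exists_ne_zero_of_mul_ne_zero [NonUnitalNonAssocSemiring R] [Fintype κ]
    {M : Matrix ι κ R} {N : Matrix κ μ R} {i : ι} {c : μ} (h : (M * N) i c ≠ 0) :
    ∃ j, M i j ≠ 0 ∧ N j c ≠ 0 :=
  exists_ne_zero_of_mulVec_ne_zero (w := N.col c) h

theorem exists_ne_zero_of_mul_mul_ne_zero [NonUnitalNonAssocSemiring R] [Fintype κ] [Fintype μ]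
    {M : Matrix ι κ R} {N : Matrix κ μ R} {P : Matrix μ ν R} {i : ι} {c : ν}
    (h : (M * N * P) i c ≠ 0) : ∃ s t, M i s ≠ 0 ∧ N s t ≠ 0 ∧ P t c ≠ 0 := by
  obtain ⟨t, h, ht⟩ := exists_ne_zero_of_mul_ne_zero h
  obtain ⟨s, hs, hst⟩ := exists_ne_zero_of_mul_ne_zero h
  exact ⟨s, t, hs, hst, ht⟩

theorem submatrix_mulVec_comp [NonUnitalNonAssocSemiring R] [Fintype κ] [Fintype μ]
    {M : Matrix ι κ R} {w : κ → R} {e : ν → ι} {f : μ → κ} (hf : f.Injective)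
    (h : ∀ i, ∀ j ∉ Set.range f, M (e i) j * w j = 0) :
    M.submatrix e f *ᵥ (w ∘ f) = (M *ᵥ w) ∘ e :=
  funext fun i => Fintype.sum_of_injective f hf _ _ (h i) fun _ => rfl

theorem exists_mul_eq_of_exact_mulVec {α : Type*} [Zero α] [NonUnitalNonAssocSemiring R] [Fintype μ]
    {N : Matrix κ μ R} {g : (κ → R) → α} (hN : Function.Exact N.mulVec g)
    {X : Matrix κ ν R} (hX : ∀ c, g (X.col c) = 0) : ∃ Y : Matrix μ ν R, N * Y = X := by
  choose y hy using fun c => (hN (X.col c)).1 (hX c)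
  exact ⟨Matrix.of fun j c => y c j, Matrix.ext fun i c => congrFun (hy c) i⟩

theorem mul_eq_zero_of_exact_mulVec [NonAssocSemiring R] [Fintype κ] [Fintype μ]
    {M : Matrix ι κ R} {N : Matrix κ μ R} (hMN : Function.Exact N.mulVec M.mulVec) :
    M * N = 0 := by
  classical
  ext i c
  have hcol : M *ᵥ (N *ᵥ Pi.single c 1) = 0 := hMN.apply_apply_eq_zero _
  rw [Matrix.mulVec_single_one] at hcol
  exact congrFun hcol i

section Compression

variable [Semiring R] [Fintype ι] [Fintype κ] [DecidableEq κ] {A : Matrix ι ι R}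
  {inc : Matrix ι κ R} {proj : Matrix κ ι R}

theorem mul_inc_eq_inc_mul_compression (hpi : proj * inc = 1) (hcomm : Commute (inc * proj) A) :
    A * inc = inc * (proj * A * inc) :=
  calc A * inc = A * (inc * proj) * inc := by simp only [Matrix.mul_assoc, hpi, Matrix.mul_one]
    _ = inc * (proj * A * inc) := by rw [← hcomm.eq]; simp only [Matrix.mul_assoc]

theorem compression_mul_proj_eq_proj_mul (hpi : proj * inc = 1)
    (hcomm : Commute (inc * proj) A) : proj * A * inc * proj = proj * A :=
  calc proj * A * inc * proj = proj * (A * (inc * proj)) := by simp only [Matrix.mul_assoc]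
    _ = proj * inc * proj * A := by rw [← hcomm.eq]; simp only [Matrix.mul_assoc]
    _ = proj * A := by rw [hpi, Matrix.one_mul]

theorem compression_mul_compression (hpi : proj * inc = 1) (hcomm : Commute (inc * proj) A) :
    proj * A * inc * (proj * A * inc) = proj * (A * A) * inc := by
  rw [Matrix.mul_assoc (proj * A), ← mul_inc_eq_inc_mul_compression hpi hcomm]
  simp only [Matrix.mul_assoc]

end Compression

end Matrices

theorem exists_dependent_seq {α : ℕ → Type*} {p : ∀ i, α i → Prop}
    {r : ∀ i, α i → α (i + 1) → Prop} (step : ∀ i a, p i a → ∃ a', p (i + 1) a' ∧ r i a a')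
    {a₀ : α 0} (h₀ : p 0 a₀) : ∃ f : ∀ i, α i, f 0 = a₀ ∧ ∀ i, r i (f i) (f (i + 1)) := by
  choose next hp hr using step
  let f : ∀ i, {a : α i // p i a} :=
    Nat.rec ⟨a₀, h₀⟩ fun i a => ⟨next i a a.2, hp i a a.2⟩
  exact ⟨fun i => (f i).1, rfl, fun i => hr i (f i).1 (f i).2⟩

/-! ### Monomial ideals and multigraded frames -/

/-- The exponent set of the colon ideal by `x ^ m`. -/
def colonExponents {σ : Type*} (U : UpperSet (σ →₀ ℕ)) (m : σ →₀ ℕ) : UpperSet (σ →₀ ℕ) where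
  carrier := {b | b + m ∈ U}
  upper' _ _ hbc hb := U.upper (add_le_add_left hbc m) hb

theorem mem_colonExponents {σ : Type*} {U : UpperSet (σ →₀ ℕ)} {m b : σ →₀ ℕ} :
    b ∈ colonExponents U m ↔ b + m ∈ U :=
  Iff.rfl

section MonomialIdeal

variable {k σ : Type*} [CommRing k]

/-- The monomial ideal with exponent set `U`. -/
noncomputable def monomialIdeal (k : Type*) [CommRing k] (U : UpperSet (σ →₀ ℕ)) :
    Ideal (MvPolynomial σ k) :=
  restrictSupportIdeal k U U.upper

theorem mem_monomialIdeal {U : UpperSet (σ →₀ ℕ)} {p : MvPolynomial σ k} :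
    p ∈ monomialIdeal k U ↔ ∀ b, coeff b p ≠ 0 → b ∈ U := by
  change p ∈ restrictSupport k (U : Set (σ →₀ ℕ)) ↔ _
  simp [mem_restrictSupport_iff, Set.subset_def]

theorem monomialIdeal_colon_monomial (U : UpperSet (σ →₀ ℕ)) (m : σ →₀ ℕ) :
    (monomialIdeal k U).colon (Ideal.span {monomial m (1 : k)}) =
      monomialIdeal k (colonExponents U m) := by
  ext p
  rw [Ideal.mem_colon_span_singleton, mem_monomialIdeal, mem_monomialIdeal]
  refine ⟨fun h b hb => h (b + m) (by simpa using hb), fun h b hb => ?_⟩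
  classical
  rw [coeff_mul_monomial', ite_ne_right_iff, mul_one] at hb
  exact tsub_add_cancel_of_le hb.1 ▸ h (b - m) hb.2

theorem monomialIdeal_eq_top_iff [Nontrivial k] {U : UpperSet (σ →₀ ℕ)} :
    monomialIdeal k U = ⊤ ↔ 0 ∈ U := by
  rw [Ideal.eq_top_iff_one, mem_monomialIdeal]
  classical
  simp [coeff_one]

end MonomialIdeal

/-- The *frame* (dehomogenization) of a multigraded free resolution of the quotient by the
monomial ideal with exponent set `U`: a basis `ι` of all free modules together, with homological
degrees `hdeg` and multidegrees `mdeg`, and the scalar coefficients `diff p q` of the differential,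
whose actual entries are `diff p q • x ^ (mdeg q - mdeg p)`. Exactness is imposed in each
multidegree `b`, where the resolution is the complex spanned by the `j` with `mdeg j ≤ b`. -/
structure MultigradedFrame (k : Type*) [CommRing k] {σ : Type*} (U : UpperSet (σ →₀ ℕ)) where
  ι : Type
  [fintype : Fintype ι]
  [decEq : DecidableEq ι]
  hdeg : ι → ℕ
  mdeg : ι → σ →₀ ℕ
  diff : Matrix ι ι k
  root : ι
  hdeg_eq_zero_iff : ∀ j, hdeg j = 0 ↔ j = root
  mdeg_root : mdeg root = 0
  hdeg_of_diff_ne_zero : ∀ ⦃p q⦄, diff p q ≠ 0 → hdeg q = hdeg p + 1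
  mdeg_le_of_diff_ne_zero : ∀ ⦃p q⦄, diff p q ≠ 0 → mdeg p ≤ mdeg q
  mdeg_mem_of_diff_root_ne_zero : ∀ ⦃q⦄, diff root q ≠ 0 → mdeg q ∈ U
  diff_mul_diff : diff * diff = 0
  exact : ∀ (b : σ →₀ ℕ) (w : ι → k), (∀ j, w j ≠ 0 → mdeg j ≤ b) → diff.mulVec w = 0 →
    (b ∈ U ∨ w root = 0) → ∃ u : ι → k, (∀ j, u j ≠ 0 → mdeg j ≤ b) ∧ diff.mulVec u = w

namespace MultigradedFrame

open scoped Matrix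

attribute [instance] fintype decEq

variable {k σ : Type*} {U : UpperSet (σ →₀ ℕ)}

section Construction

variable [CommRing k]

/-- The frame of the resolution `0 → R → R → 0` of the quotient by the zero ideal. -/
def ofTop : MultigradedFrame k (⊤ : UpperSet (σ →₀ ℕ)) where
  ι := Unit
  hdeg _ := 0
  mdeg _ := 0
  diff := 0
  root := ()
  hdeg_eq_zero_iff _ := by simp
  mdeg_root := rfl
  hdeg_of_diff_ne_zero := by simp
  mdeg_le_of_diff_ne_zero := by simp
  mdeg_mem_of_diff_root_ne_zero := by simp
  diff_mul_diff := by simp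
  exact b w _ _ hw := by
    have hw' : w () = 0 := hw.resolve_left (UpperSet.notMem_top)
    exact ⟨0, by simp, funext fun _ => by simpa using hw'.symm⟩

theorem exists_fromBlocks_mulVec_eq (F : MultigradedFrame k U) {g b : σ →₀ ℕ} {w₁ w₂ : F.ι → k}
    (hw₁ : ∀ j, w₁ j ≠ 0 → F.mdeg j ≤ b) (hw₂ : ∀ j, w₂ j ≠ 0 → F.mdeg j ⊔ g ≤ b)
    (hw : F.diff *ᵥ w₁ + w₂ = 0) (hroot : b ∈ U ⊓ UpperSet.Ici g ∨ w₁ F.root = 0) :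
    ∃ u : F.ι ⊕ F.ι → k, (∀ j, u j ≠ 0 → Sum.elim F.mdeg (fun j => F.mdeg j ⊔ g) j ≤ b) ∧
      Matrix.fromBlocks F.diff 1 0 (-F.diff) *ᵥ u = Sum.elim w₁ w₂ := by
  by_cases hg : g ≤ b
  · refine ⟨Sum.elim 0 w₁, ?_, ?_⟩
    · rintro (j | j) hj
      · exact absurd rfl hj
      · exact sup_le (hw₁ j hj) hg
    · simp [Matrix.fromBlocks_mulVec, Matrix.neg_mulVec, neg_eq_of_add_eq_zero_right hw]
  · obtain rfl : w₂ = 0 := funext fun j => by_contra fun hj => hg (le_sup_right.trans (hw₂ j hj))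
    have hroot' : b ∈ U ∨ w₁ F.root = 0 :=
      hroot.imp_left fun h => (UpperSet.mem_inf_iff.1 h).resolve_right hg
    obtain ⟨u, hub, hu⟩ := F.exact b w₁ hw₁ (by simpa using hw) hroot'
    refine ⟨Sum.elim u 0, ?_, by simp [Matrix.fromBlocks_mulVec, hu]⟩
    rintro (j | j) hj
    · exact hub j hj
    · exact absurd rfl hj

/-- The mapping cone of the inclusion of the frame of `x ^ g * R / (I ∩ (x ^ g))`, whose
multidegrees are the joins `mdeg j ⊔ g`, into a frame of `R / I`: a frame of `R / (I + (x ^ g))`. -/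
noncomputable def cone (F : MultigradedFrame k U) (g : σ →₀ ℕ) :
    MultigradedFrame k (U ⊓ UpperSet.Ici g) where
  ι := F.ι ⊕ F.ι
  hdeg := Sum.elim F.hdeg fun j => F.hdeg j + 1
  mdeg := Sum.elim F.mdeg fun j => F.mdeg j ⊔ g
  diff := Matrix.fromBlocks F.diff 1 0 (-F.diff)
  root := Sum.inl F.root
  hdeg_eq_zero_iff := by simp [F.hdeg_eq_zero_iff]
  mdeg_root := F.mdeg_root
  hdeg_of_diff_ne_zero := by
    rintro (p | p) (q | q) h
    · exact F.hdeg_of_diff_ne_zero h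
    · obtain rfl : p = q := of_not_not (mt Matrix.one_apply_ne h)
      rfl
    · exact absurd rfl h
    · exact congrArg (· + 1) (F.hdeg_of_diff_ne_zero (neg_ne_zero.1 h))
  mdeg_le_of_diff_ne_zero := by
    rintro (p | p) (q | q) h
    · exact F.mdeg_le_of_diff_ne_zero h
    · obtain rfl : p = q := of_not_not (mt Matrix.one_apply_ne h)
      exact le_sup_left
    · exact absurd rfl h
    · exact sup_le_sup_right (F.mdeg_le_of_diff_ne_zero (neg_ne_zero.1 h)) g
  mdeg_mem_of_diff_root_ne_zero := by
    rintro (q | q) h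
    · exact UpperSet.mem_inf_iff.2 (.inl (F.mdeg_mem_of_diff_root_ne_zero h))
    · exact UpperSet.mem_inf_iff.2 (.inr (UpperSet.mem_Ici_iff.2 le_sup_right))
  diff_mul_diff := by simp [Matrix.fromBlocks_multiply, F.diff_mul_diff]
  exact b w hwb hw hwU := by
    obtain ⟨w₁, w₂, rfl⟩ : ∃ w₁ w₂, w = Sum.elim w₁ w₂ := ⟨_, _, (Sum.elim_comp_inl_inr w).symm⟩
    rw [Matrix.fromBlocks_mulVec] at hw
    exact F.exists_fromBlocks_mulVec_eq (fun j => hwb (.inl j)) (fun j => hwb (.inr j))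
      (by simpa using congrArg (· ∘ Sum.inl) hw) hwU

theorem nonempty_upperClosure (G : Finset (σ →₀ ℕ)) :
    Nonempty (MultigradedFrame k (upperClosure (G : Set (σ →₀ ℕ)))) := by
  classical
  induction G using Finset.induction_on with
  | empty => simpa using ⟨ofTop (k := k) (σ := σ)⟩
  | insert g G _ ih =>
    obtain ⟨F⟩ := ih
    have hU : upperClosure (↑(insert g G) : Set (σ →₀ ℕ)) =
        upperClosure (G : Set (σ →₀ ℕ)) ⊓ UpperSet.Ici g := by
      rw [Finset.coe_insert, Set.insert_eq, upperClosure_union, upperClosure_singleton, inf_comm]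
    exact hU ▸ ⟨F.cone g⟩

/-- The frame of the colon ideal by `x ^ m`: in multidegree `b` the complex is that of `F` in
multidegree `b + m`. -/
noncomputable def colon (F : MultigradedFrame k U) (m : σ →₀ ℕ) :
    MultigradedFrame k (colonExponents U m) where
  __ := F
  mdeg j := F.mdeg j - m
  mdeg_root := by simp [F.mdeg_root]
  mdeg_le_of_diff_ne_zero _ _ h := tsub_le_tsub_right (F.mdeg_le_of_diff_ne_zero h) m
  mdeg_mem_of_diff_root_ne_zero _ h := U.upper le_tsub_add (F.mdeg_mem_of_diff_root_ne_zero h)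
  exact b w hwb hw hwU := by
    simp only [tsub_le_iff_right] at hwb ⊢
    exact F.exact (b + m) w hwb hw hwU

end Construction

section Retract

variable [CommRing k] {F : MultigradedFrame k U} {ι' : Type} [Fintype ι'] [DecidableEq ι']
  {f : ι' → F.ι} {root' : ι'} {inc : Matrix F.ι ι' k} {proj : Matrix ι' F.ι k}

theorem exists_compression_mulVec_eq (hf : f.Injective) (hroot : f root' = F.root)
    (hinc : ∀ j s, inc j s ≠ 0 → F.hdeg j = F.hdeg (f s) ∧ F.mdeg j ≤ F.mdeg (f s))
    (hproj : ∀ s j, proj s j ≠ 0 → F.mdeg (f s) ≤ F.mdeg j)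
    (hpi : proj * inc = 1) (hcomm : Commute (inc * proj) F.diff) {b : σ →₀ ℕ} {w : ι' → k}
    (hwb : ∀ s, w s ≠ 0 → F.mdeg (f s) ≤ b) (hw : (proj * F.diff * inc) *ᵥ w = 0)
    (hwU : b ∈ U ∨ w root' = 0) :
    ∃ u : ι' → k, (∀ s, u s ≠ 0 → F.mdeg (f s) ≤ b) ∧ (proj * F.diff * inc) *ᵥ u = w := by
  have hinc_le (j) (hj : (inc *ᵥ w) j ≠ 0) : F.mdeg j ≤ b := by
    obtain ⟨s, hs, hws⟩ := exists_ne_zero_of_mulVec_ne_zero hj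
    exact (hinc j s hs).2.trans (hwb s hws)
  have hinc_ker : F.diff *ᵥ (inc *ᵥ w) = 0 := by
    rw [Matrix.mulVec_mulVec, mul_inc_eq_inc_mul_compression hpi hcomm, ← Matrix.mulVec_mulVec,
      hw, Matrix.mulVec_zero]
  have hinc_root (h : w root' = 0) : (inc *ᵥ w) F.root = 0 := by
    by_contra hne
    obtain ⟨s, hs, hws⟩ := exists_ne_zero_of_mulVec_ne_zero hne
    have hfs : f s = F.root := by
      rw [← F.hdeg_eq_zero_iff, ← (hinc _ s hs).1, F.hdeg_eq_zero_iff]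
    obtain rfl : s = root' := hf (hfs.trans hroot.symm)
    exact hws h
  obtain ⟨u, hub, hu⟩ := F.exact b (inc *ᵥ w) hinc_le hinc_ker (hwU.imp_right hinc_root)
  refine ⟨proj *ᵥ u, fun s hs => ?_, ?_⟩
  · obtain ⟨j, hj, huj⟩ := exists_ne_zero_of_mulVec_ne_zero hs
    exact (hproj s j hj).trans (hub j huj)
  · rw [Matrix.mulVec_mulVec, compression_mul_proj_eq_proj_mul hpi hcomm,
      ← Matrix.mulVec_mulVec, hu, Matrix.mulVec_mulVec, hpi, Matrix.one_mulVec]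

/-- The frame carried by a direct summand: the splitting is given by an idempotent endomorphism
`inc * proj` of the complex, expressed in bases whose degrees are compatible. -/
noncomputable def retract (F : MultigradedFrame k U) {f : ι' → F.ι} (hf : f.Injective)
    {root' : ι'} (hroot : f root' = F.root) {inc : Matrix F.ι ι' k} {proj : Matrix ι' F.ι k}
    (hinc : ∀ j s, inc j s ≠ 0 → F.hdeg j = F.hdeg (f s) ∧ F.mdeg j ≤ F.mdeg (f s))
    (hproj : ∀ s j, proj s j ≠ 0 → F.hdeg (f s) = F.hdeg j ∧ F.mdeg (f s) ≤ F.mdeg j)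
    (hpi : proj * inc = 1) (hcomm : Commute (inc * proj) F.diff) : MultigradedFrame k U where
  ι := ι'
  hdeg := F.hdeg ∘ f
  mdeg := F.mdeg ∘ f
  diff := proj * F.diff * inc
  root := root'
  hdeg_eq_zero_iff s := by
    rw [Function.comp_apply, F.hdeg_eq_zero_iff, ← hroot, hf.eq_iff]
  mdeg_root := by rw [Function.comp_apply, hroot, F.mdeg_root]
  hdeg_of_diff_ne_zero s t h := by
    obtain ⟨p, q, hp, hpq, hq⟩ := exists_ne_zero_of_mul_mul_ne_zero h
    calc F.hdeg (f t) = F.hdeg q := (hinc q t hq).1.symm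
      _ = F.hdeg p + 1 := F.hdeg_of_diff_ne_zero hpq
      _ = F.hdeg (f s) + 1 := by rw [(hproj s p hp).1]
  mdeg_le_of_diff_ne_zero s t h := by
    obtain ⟨p, q, hp, hpq, hq⟩ := exists_ne_zero_of_mul_mul_ne_zero h
    exact (hproj s p hp).2.trans ((F.mdeg_le_of_diff_ne_zero hpq).trans (hinc q t hq).2)
  mdeg_mem_of_diff_root_ne_zero t h := by
    obtain ⟨p, q, hp, hpq, hq⟩ := exists_ne_zero_of_mul_mul_ne_zero h
    obtain rfl : p = F.root := by
      rw [← F.hdeg_eq_zero_iff, ← (hproj _ p hp).1, hroot, F.hdeg_eq_zero_iff]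
    exact U.upper (hinc q t hq).2 (F.mdeg_mem_of_diff_root_ne_zero hpq)
  diff_mul_diff := by
    rw [compression_mul_compression hpi hcomm, F.diff_mul_diff, Matrix.mul_zero, Matrix.zero_mul]
  exact _ _ hwb hw hwU :=
    exists_compression_mulVec_eq hf hroot hinc (fun s j h => (hproj s j h).2) hpi hcomm hwb hw hwU

end Retract

section Minimal

variable [Field k]

theorem exists_card_lt (F : MultigradedFrame k U) (hU : 0 ∉ U) {p q : F.ι}
    (hpq : F.diff p q ≠ 0) (hmdeg : F.mdeg p = F.mdeg q) :
    ∃ F' : MultigradedFrame k U, Fintype.card F'.ι < Fintype.card F.ι := by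
  have hhdeg : F.hdeg q = F.hdeg p + 1 := F.hdeg_of_diff_ne_zero hpq
  have hp_ne : F.root ≠ p := by
    rintro rfl
    exact hU (F.mdeg_root ▸ hmdeg ▸ F.mdeg_mem_of_diff_root_ne_zero hpq)
  have hq_ne : F.root ≠ q := by
    rintro rfl
    simp [(F.hdeg_eq_zero_iff _).2 rfl] at hhdeg
  have hpq_ne : p ≠ q := by
    rintro rfl
    simp at hhdeg
  have hinc (j) (s : {j // j ≠ p ∧ j ≠ q}) (hjs : pivotInc F.diff p q j s ≠ 0) :
      F.hdeg j = F.hdeg s ∧ F.mdeg j ≤ F.mdeg s := by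
    obtain rfl | ⟨rfl, hps⟩ := pivotInc_apply_ne_zero hjs
    · exact ⟨rfl, le_rfl⟩
    · exact ⟨hhdeg.trans (F.hdeg_of_diff_ne_zero hps).symm,
        hmdeg ▸ F.mdeg_le_of_diff_ne_zero hps⟩
  have hproj (s : {j // j ≠ p ∧ j ≠ q}) (j) (hsj : pivotProj F.diff p q s j ≠ 0) :
      F.hdeg s = F.hdeg j ∧ F.mdeg s ≤ F.mdeg j := by
    obtain rfl | ⟨rfl, hsq⟩ := pivotProj_apply_ne_zero hsj
    · exact ⟨rfl, le_rfl⟩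
    · exact ⟨Nat.succ_injective ((F.hdeg_of_diff_ne_zero hsq).symm.trans hhdeg),
        hmdeg ▸ F.mdeg_le_of_diff_ne_zero hsq⟩
  exact ⟨F.retract Subtype.val_injective (root' := ⟨F.root, hp_ne, hq_ne⟩) rfl hinc hproj
    (pivotProj_mul_pivotInc F.diff hpq_ne) (commute_pivotInc_mul_pivotProj hpq F.diff_mul_diff),
    Fintype.card_subtype_lt (x := p) (by simp)⟩

theorem exists_minimal (F : MultigradedFrame k U) (hU : 0 ∉ U) :
    ∃ F : MultigradedFrame k U, ∀ p q, F.mdeg p = F.mdeg q → F.diff p q = 0 := by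
  induction hn : Fintype.card F.ι using Nat.strong_induction_on generalizing F with
  | _ n ih =>
    by_cases hmin : ∀ p q, F.mdeg p = F.mdeg q → F.diff p q = 0
    · exact ⟨F, hmin⟩
    · push Not at hmin
      obtain ⟨p, q, hpq, hne⟩ := hmin
      obtain ⟨F', hF'⟩ := F.exists_card_lt hU hne hpq
      exact ih _ (hn ▸ hF') F' rfl

end Minimal

/-! ### The resolution with a given frame -/

section Homogenization

/-- The differential of the resolution: `diff` with its entries made multihomogeneous. -/
noncomputable def homogDiff [CommRing k] (F : MultigradedFrame k U) :
    Matrix F.ι F.ι (MvPolynomial σ k) :=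
  Matrix.of fun p q => monomial (F.mdeg q - F.mdeg p) (F.diff p q)

/-- The component of `w` in multidegree `b`, where the `j`-th basis element has
multidegree `mdeg j`. -/
noncomputable def strand [CommRing k] (F : MultigradedFrame k U) (w : F.ι → MvPolynomial σ k)
    (b : σ →₀ ℕ) : F.ι → k :=
  fun j => coeff b (monomial (F.mdeg j) 1 * w j)

variable [CommRing k] (F : MultigradedFrame k U)

theorem monomial_mul_homogDiff (p q : F.ι) :
    monomial (F.mdeg p) 1 * F.homogDiff p q = C (F.diff p q) * monomial (F.mdeg q) 1 := by
  by_cases h : F.diff p q = 0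
  · simp [homogDiff, h]
  · simp [homogDiff, monomial_mul, C_mul_monomial,
      add_tsub_cancel_of_le (F.mdeg_le_of_diff_ne_zero h)]

theorem strand_homogDiff_mulVec (w : F.ι → MvPolynomial σ k) (b : σ →₀ ℕ) :
    F.strand (F.homogDiff *ᵥ w) b = F.diff *ᵥ F.strand w b := by
  ext p
  simp only [strand, Matrix.mulVec, dotProduct, Finset.mul_sum, ← mul_assoc,
    monomial_mul_homogDiff, coeff_sum]
  simp only [mul_assoc, coeff_C_mul]

theorem mdeg_le_of_strand_ne_zero {w : F.ι → MvPolynomial σ k} {b : σ →₀ ℕ} {j : F.ι}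
    (h : F.strand w b j ≠ 0) : F.mdeg j ≤ b := by
  classical
  rw [strand, coeff_monomial_mul'] at h
  exact (ite_ne_right_iff.1 h).1

theorem strand_root (w : F.ι → MvPolynomial σ k) (b : σ →₀ ℕ) :
    F.strand w b F.root = coeff b (w F.root) := by
  simp [strand, F.mdeg_root]

theorem strand_injective : Function.Injective F.strand := by
  intro w w' h
  ext j b
  simpa [strand] using congrFun₂ h (F.mdeg j + b) j

theorem exists_strand_eq {u : (σ →₀ ℕ) → F.ι → k} (hfin : u.support.Finite)
    (hu : ∀ b j, u b j ≠ 0 → F.mdeg j ≤ b) : ∃ w, F.strand w = u := by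
  classical
  refine ⟨fun j => (∑ b ∈ hfin.toFinset, monomial b (u b j)).divMonomial (F.mdeg j), ?_⟩
  ext b j
  rw [strand, coeff_monomial_mul']
  split_ifs with hb
  · suffices u b = 0 → u b j = 0 by
      simpa [coeff_divMonomial, coeff_sum, add_tsub_cancel_of_le hb, coeff_monomial, eq_comm]
    exact fun h => congrFun h j
  · exact (of_not_not (mt (hu b j) hb)).symm

theorem finite_support_strand (w : F.ι → MvPolynomial σ k) : (F.strand w).support.Finite := by
  refine (Set.finite_iUnion fun j => (monomial (F.mdeg j) 1 * w j).support.finite_toSet).subset ?_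
  intro b hb
  obtain ⟨j, hj⟩ := Function.ne_iff.1 hb
  exact Set.mem_iUnion.2 ⟨j, mem_support_iff.2 hj⟩

theorem exists_homogDiff_mulVec_eq {w : F.ι → MvPolynomial σ k} (hw : F.homogDiff *ᵥ w = 0)
    (hroot : w F.root ∈ monomialIdeal k U) : ∃ u, F.homogDiff *ᵥ u = w := by
  have hlift (b) : ∃ u, (∀ j, u j ≠ 0 → F.mdeg j ≤ b) ∧ F.diff *ᵥ u = F.strand w b := by
    refine F.exact b _ (fun j => F.mdeg_le_of_strand_ne_zero) ?_ ?_
    · rw [← strand_homogDiff_mulVec, hw]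
      ext j
      simp [strand]
    · rw [strand_root, or_iff_not_imp_right]
      exact mem_monomialIdeal.1 hroot b
  classical
  choose u hub hu using hlift
  let u' := (F.strand w).support.indicator u
  obtain ⟨v, hv⟩ : ∃ v, F.strand v = u' := by
    refine F.exists_strand_eq ((F.finite_support_strand w).subset Set.support_indicator_subset)
      fun b j hj => hub b j fun h => hj ?_
    by_cases hb : b ∈ (F.strand w).support <;> simp [u', hb, h]
  refine ⟨v, F.strand_injective (funext fun b => ?_)⟩
  rw [strand_homogDiff_mulVec, hv]
  by_cases hb : F.strand w b = 0
  · simp [u', hb]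
  · simp [u', hb, hu]

theorem homogDiff_root_mem (q : F.ι) : F.homogDiff F.root q ∈ monomialIdeal k U := by
  classical
  refine mem_monomialIdeal.2 fun b hb => ?_
  obtain ⟨rfl, hq⟩ : F.mdeg q - F.mdeg F.root = b ∧ F.diff F.root q ≠ 0 := by
    simpa [homogDiff, coeff_monomial] using hb
  simpa [F.mdeg_root] using F.mdeg_mem_of_diff_root_ne_zero hq

theorem homogDiff_mul_homogDiff : F.homogDiff * F.homogDiff = 0 := by
  refine Matrix.ext_of_mulVec_single fun c => F.strand_injective (funext fun b => ?_)
  simp only [← Matrix.mulVec_mulVec, strand_homogDiff_mulVec]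
  simp only [Matrix.mulVec_mulVec, F.diff_mul_diff]
  ext j
  simp [strand]

end Homogenization

section Resolution

/-- An enumeration of the basis elements of homological degree `i`. -/
noncomputable def enum [CommRing k] (F : MultigradedFrame k U) (i : ℕ) :
    Fin (Fintype.card {j // F.hdeg j = i}) → F.ι :=
  fun r => ((Fintype.equivFin _).symm r).1

section Enum

variable [CommRing k] (F : MultigradedFrame k U)

theorem enum_injective (i : ℕ) : (F.enum i).Injective :=
  Subtype.val_injective.comp (Equiv.injective _)

theorem hdeg_enum (i : ℕ) (r) : F.hdeg (F.enum i r) = i :=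
  ((Fintype.equivFin _).symm r).2

theorem mem_range_enum {i : ℕ} {j : F.ι} : j ∈ Set.range (F.enum i) ↔ F.hdeg j = i := by
  refine ⟨?_, fun h => ⟨Fintype.equivFin _ ⟨j, h⟩, by simp [enum]⟩⟩
  rintro ⟨r, rfl⟩
  exact F.hdeg_enum i r

theorem exists_comp_enum_eq {R : Type*} [Zero R] (i : ℕ)
    (w : Fin (Fintype.card {j // F.hdeg j = i}) → R) :
    ∃ W : F.ι → R, (∀ j, W j ≠ 0 → F.hdeg j = i) ∧ W ∘ F.enum i = w := by
  refine ⟨Function.extend (F.enum i) w 0, fun j hj => ?_,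
    Function.extend_comp (F.enum_injective i) w 0⟩
  by_contra h
  exact hj (Function.extend_apply' _ _ _ (mt F.mem_range_enum.1 h))

theorem homogDiff_eq_zero {p q : F.ι} (h : F.hdeg q ≠ F.hdeg p + 1) : F.homogDiff p q = 0 := by
  have hpq : F.diff p q = 0 := of_not_not (mt (F.hdeg_of_diff_ne_zero (p := p) (q := q)) h)
  simp [homogDiff, hpq]

theorem submatrix_enum_mulVec (i : ℕ) (W : F.ι → MvPolynomial σ k) :
    F.homogDiff.submatrix (F.enum i) (F.enum (i + 1)) *ᵥ (W ∘ F.enum (i + 1)) =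
      (F.homogDiff *ᵥ W) ∘ F.enum i := by
  refine submatrix_mulVec_comp (F.enum_injective _) fun r j hj => ?_
  rw [F.mem_range_enum] at hj
  rw [F.homogDiff_eq_zero (by rwa [hdeg_enum]), zero_mul]

theorem sum_comp_enum_zero {M : Type*} [AddCommMonoid M] (W : F.ι → M) :
    ∑ r, W (F.enum 0 r) = W F.root := by
  obtain ⟨r₀, hr₀⟩ := F.mem_range_enum.2 ((F.hdeg_eq_zero_iff F.root).2 rfl)
  rw [← hr₀]
  refine Fintype.sum_eq_single r₀ fun r hr => absurd (F.enum_injective 0 ?_) hr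
  rw [hr₀, ← F.hdeg_eq_zero_iff, F.hdeg_enum]

theorem exists_submatrix_enum_mulVec_eq {i : ℕ} {W : F.ι → MvPolynomial σ k}
    (hW : ∀ j, W j ≠ 0 → F.hdeg j = i)
    (hker : ∀ p, F.hdeg p + 1 = i → (F.homogDiff *ᵥ W) p = 0)
    (hroot : W F.root ∈ monomialIdeal k U) :
    ∃ u, F.homogDiff.submatrix (F.enum i) (F.enum (i + 1)) *ᵥ u = W ∘ F.enum i := by
  have hzero : F.homogDiff *ᵥ W = 0 := by
    ext1 p
    by_contra hp
    obtain ⟨q, hpq, hq⟩ := exists_ne_zero_of_mulVec_ne_zero hp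
    have hdeg : F.hdeg q = F.hdeg p + 1 := of_not_not (mt F.homogDiff_eq_zero hpq)
    exact hp (hker p (hdeg ▸ hW q hq))
  obtain ⟨u, rfl⟩ := F.exists_homogDiff_mulVec_eq hzero hroot
  exact ⟨u ∘ F.enum (i + 1), F.submatrix_enum_mulVec i u⟩

end Enum

variable [Field k] {n : ℕ} {U : UpperSet (Fin n →₀ ℕ)} (F : MultigradedFrame k U)

theorem homogOfDeg_homogDiff (p q : F.ι) :
    HomogOfDeg (F.homogDiff p q) (((F.mdeg q).degree : ℤ) - (F.mdeg p).degree) := by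
  by_cases h : F.diff p q = 0
  · exact .inl (by simp [homogDiff, h])
  · have hle := F.mdeg_le_of_diff_ne_zero h
    refine .inr ⟨_, ?_, isHomogeneous_monomial _ rfl⟩
    rw [eq_sub_iff_add_eq, ← Nat.cast_add, ← Finsupp.degree.map_add, tsub_add_cancel_of_le hle]

theorem exact_submatrix_enum (i : ℕ) :
    Function.Exact (F.homogDiff.submatrix (F.enum (i + 1)) (F.enum (i + 1 + 1))).mulVec
      (F.homogDiff.submatrix (F.enum i) (F.enum (i + 1))).mulVec := by
  intro w
  constructor
  · intro hw
    obtain ⟨W, hW, rfl⟩ := F.exists_comp_enum_eq (i + 1) w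
    rw [F.submatrix_enum_mulVec] at hw
    refine F.exists_submatrix_enum_mulVec_eq hW (fun p hp => ?_) ?_
    · obtain ⟨r, rfl⟩ := F.mem_range_enum.2 (Nat.succ_injective hp)
      exact congrFun hw r
    · have hroot : W F.root = 0 := of_not_not fun h => by
        simpa [(F.hdeg_eq_zero_iff _).2 rfl] using hW _ h
      exact hroot ▸ zero_mem _
  · rintro ⟨u, rfl⟩
    obtain ⟨u, -, rfl⟩ := F.exists_comp_enum_eq _ u
    rw [F.submatrix_enum_mulVec, F.submatrix_enum_mulVec, Matrix.mulVec_mulVec,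
      F.homogDiff_mul_homogDiff, Matrix.zero_mulVec, Pi.zero_comp]

theorem exact_submatrix_enum_zero :
    Function.Exact (F.homogDiff.submatrix (F.enum 0) (F.enum 1)).mulVec
      fun w => Ideal.Quotient.mk (monomialIdeal k U) (∑ r, w r * 1) := by
  intro w
  simp only [mul_one, Ideal.Quotient.eq_zero_iff_mem]
  constructor
  · intro hw
    obtain ⟨W, hW, rfl⟩ := F.exists_comp_enum_eq 0 w
    exact F.exists_submatrix_enum_mulVec_eq hW (fun p hp => absurd hp (Nat.succ_ne_zero _))
      (F.sum_comp_enum_zero W ▸ hw)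
  · rintro ⟨u, rfl⟩
    obtain ⟨u, -, rfl⟩ := F.exists_comp_enum_eq 1 u
    rw [F.submatrix_enum_mulVec]
    simp only [Function.comp_apply, F.sum_comp_enum_zero]
    exact sum_mem fun q _ => Ideal.mul_mem_right _ _ (F.homogDiff_root_mem q)

/-- The graded free resolution with frame `F`, with total degrees as twists. -/
noncomputable def resolution : GradedFreeRes (monomialIdeal k U) where
  len := Finset.univ.sup F.hdeg
  b i := Fintype.card {j // F.hdeg j = i}
  hb i hi := Fintype.card_eq_zero_iff.2
    ⟨fun j => (Finset.le_sup (Finset.mem_univ j.1)).not_gt (j.2 ▸ hi)⟩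
  D i r := (F.mdeg (F.enum i r)).degree
  A i := F.homogDiff.submatrix (F.enum i) (F.enum (i + 1))
  v _ := 1
  hv r := by
    have hroot : F.enum 0 r = F.root := (F.hdeg_eq_zero_iff _).1 (F.hdeg_enum 0 r)
    exact .inr ⟨0, by simp [hroot, F.mdeg_root], isHomogeneous_one _ _⟩
  hA i r c := F.homogOfDeg_homogDiff _ _
  haug y := by
    obtain ⟨p, rfl⟩ := Ideal.Quotient.mk_surjective y
    simp only [mul_one]
    exact ⟨fun _ => p, congrArg _ (F.sum_comp_enum_zero fun _ => p)⟩
  hex0 := F.exact_submatrix_enum_zero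
  hex := F.exact_submatrix_enum

theorem forall_resolution_D {P : ℕ → ℤ → Prop} :
    (∀ i (c : Fin (F.resolution.b i)), P i (F.resolution.D i c)) ↔
      ∀ j, P (F.hdeg j) (F.mdeg j).degree := by
  refine ⟨fun h j => ?_, fun h i c => ?_⟩
  · obtain ⟨c, hc⟩ := F.mem_range_enum.2 (rfl : F.hdeg j = F.hdeg j)
    simpa [resolution, hc] using h (F.hdeg j) c
  · have hP := h (F.enum i c)
    rw [F.hdeg_enum i c] at hP
    exact hP

end Resolution

end MultigradedFrame

/-! ### Comparison maps and regularity -/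

section DegreePart

open scoped Matrix

variable {ι κ μ σ R M : Type*} [CommRing R] [AddCommGroup M] {w : σ → M}

theorem weightedHomogeneousComponent_mul_of_left {p : MvPolynomial σ R} {e : M}
    (hp : IsWeightedHomogeneous w p e) (q : MvPolynomial σ R) (d : M) :
    weightedHomogeneousComponent w d (p * q) = p * weightedHomogeneousComponent w (d - e) q := by
  classical
  let := weightedGradedAlgebra R w
  have h := DirectSum.coe_decompose_mul_add_of_left_mem (weightedHomogeneousSubmodule R w)
    (i := e) (j := d - e) (b := q) hp
  rw [add_sub_cancel] at h
  exact (decompose'_apply R w _ _).symm.trans (h.trans (congrArg _ (decompose'_apply R w _ _)))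

/-- The degree-preserving part of the homomorphism with matrix `X` between free modules whose bases
have degrees `c` and `b`. -/
noncomputable def degreePart (w : σ → M) (b : κ → M) (c : μ → M)
    (X : Matrix κ μ (MvPolynomial σ R)) : Matrix κ μ (MvPolynomial σ R) :=
  Matrix.of fun s t => weightedHomogeneousComponent w (c t - b s) (X s t)

theorem eq_of_constantCoeff_degreePart_ne_zero {b : κ → M} {c : μ → M}
    {X : Matrix κ μ (MvPolynomial σ R)} {s : κ} {t : μ}
    (h : constantCoeff (degreePart w b c X s t) ≠ 0) : b s = c t := by
  have hdeg := weightedHomogeneousComponent_isWeightedHomogeneous (c t - b s) (X s t) h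
  rw [map_zero] at hdeg
  exact (sub_eq_zero.1 hdeg.symm).symm

variable [Fintype κ]

theorem vecMul_degreePart {u : κ → MvPolynomial σ R} {b : κ → M} {e : M}
    (hu : ∀ s, IsWeightedHomogeneous w (u s) (b s - e)) (c : μ → M)
    (X : Matrix κ μ (MvPolynomial σ R)) (t : μ) :
    (u ᵥ* degreePart w b c X) t = weightedHomogeneousComponent w (c t - e) ((u ᵥ* X) t) := by
  simp only [Matrix.vecMul, dotProduct, map_sum]
  refine Finset.sum_congr rfl fun s _ => ?_
  rw [weightedHomogeneousComponent_mul_of_left (hu s), sub_sub_sub_cancel_right]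
  rfl

theorem mul_degreePart {A : Matrix ι κ (MvPolynomial σ R)} {a : ι → M} {b : κ → M}
    (hA : ∀ r s, IsWeightedHomogeneous w (A r s) (b s - a r)) (c : μ → M)
    (X : Matrix κ μ (MvPolynomial σ R)) :
    A * degreePart w b c X = degreePart w a c (A * X) :=
  Matrix.ext fun r t => vecMul_degreePart (hA r) c X t

theorem degreePart_mul {A : Matrix κ μ (MvPolynomial σ R)} {b : κ → M} {c : μ → M}
    (hA : ∀ s t, IsWeightedHomogeneous w (A s t) (c t - b s)) (a : ι → M)
    (X : Matrix ι κ (MvPolynomial σ R)) :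
    degreePart w a b X * A = degreePart w a c (X * A) := by
  ext1 r t
  simp only [degreePart, Matrix.mul_apply, Matrix.of_apply, map_sum]
  refine Finset.sum_congr rfl fun s _ => ?_
  rw [mul_comm (X r s), weightedHomogeneousComponent_mul_of_left (hA s t), mul_comm,
    sub_sub_sub_cancel_left]

end DegreePart

section Homogeneous

variable {k : Type*} [Field k] {n : ℕ}

theorem HomogOfDeg.isWeightedHomogeneous {p : MvPolynomial (Fin n) k} {d : ℤ}
    (hp : HomogOfDeg p d) : IsWeightedHomogeneous (1 : Fin n → ℤ) p d := by
  obtain rfl | ⟨m, rfl, hp⟩ := hp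
  · exact isWeightedHomogeneous_zero k 1 d
  · intro b hb
    rw [← hp hb]
    simp [Finsupp.weight_apply, Finsupp.sum]

theorem IsHomogeneousIdeal.weightedHomogeneousComponent_mem {I : Ideal (MvPolynomial (Fin n) k)}
    (hI : IsHomogeneousIdeal I) {p : MvPolynomial (Fin n) k} (hp : p ∈ I) (d : ℤ) :
    weightedHomogeneousComponent (1 : Fin n → ℤ) d p ∈ I := by
  obtain ⟨T, hT, rfl⟩ := hI
  let := weightedGradedAlgebra k (1 : Fin n → ℤ)
  refine weightedHomogeneousComponent_mem_of_mem k 1 (Ideal.homogeneous_span _ T fun p hp => ?_)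
    hp d
  obtain ⟨m, hm⟩ := hT p hp
  exact ⟨m, HomogOfDeg.isWeightedHomogeneous (.inr ⟨m, rfl, hm⟩)⟩

theorem IsMonomialIdeal.isHomogeneousIdeal {I : Ideal (MvPolynomial (Fin n) k)}
    (hI : IsMonomialIdeal I) : IsHomogeneousIdeal I := by
  obtain ⟨T, rfl⟩ := hI
  refine ⟨_, ?_, rfl⟩
  rintro _ ⟨m, -, rfl⟩
  exact ⟨m.degree, isHomogeneous_monomial _ rfl⟩

end Homogeneous

theorem vecMul_mem {ι κ R : Type*} [CommRing R] [Fintype ι] {I : Ideal R} {u : ι → R}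
    (hu : ∀ i, u i ∈ I) (X : Matrix ι κ R) (c : κ) : Matrix.vecMul u X c ∈ I :=
  sum_mem fun i _ => I.mul_mem_right _ (hu i)

namespace GradedFreeRes

open scoped Matrix

variable {k : Type*} [Field k] {n : ℕ} {I : Ideal (MvPolynomial (Fin n) k)}

section Exactness

variable (P : GradedFreeRes I)

theorem A_mul_A (i : ℕ) : P.A i * P.A (i + 1) = 0 :=
  mul_eq_zero_of_exact_mulVec (P.hex i)

theorem exists_A_succ_mul_eq {ν : Type*} {i : ℕ}
    {X : Matrix (Fin (P.b (i + 1))) ν (MvPolynomial (Fin n) k)} (hX : P.A i * X = 0) :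
    ∃ Y : Matrix (Fin (P.b (i + 1 + 1))) ν (MvPolynomial (Fin n) k), P.A (i + 1) * Y = X :=
  exists_mul_eq_of_exact_mulVec (P.hex i) fun c => funext fun r => congrFun₂ hX r c

theorem exact_A_zero :
    Function.Exact (P.A 0).mulVec fun w => Ideal.Quotient.mk I (P.v ⬝ᵥ w) := by
  simpa only [dotProduct, mul_comm] using P.hex0

theorem vecMul_A_zero_mem (c : Fin (P.b 1)) : (P.v ᵥ* P.A 0) c ∈ I := by
  have h := P.exact_A_zero.apply_apply_eq_zero (Pi.single c 1)
  rwa [Matrix.mulVec_single_one, Ideal.Quotient.eq_zero_iff_mem] at h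

theorem exists_A_zero_mul_eq {ν : Type*} {X : Matrix (Fin (P.b 0)) ν (MvPolynomial (Fin n) k)}
    (hX : ∀ c, (P.v ᵥ* X) c ∈ I) :
    ∃ Y : Matrix (Fin (P.b 1)) ν (MvPolynomial (Fin n) k), P.A 0 * Y = X :=
  exists_mul_eq_of_exact_mulVec P.exact_A_zero fun c => Ideal.Quotient.eq_zero_iff_mem.2 (hX c)

theorem exists_vecMul_sub_mem {ν : Type*} (y : ν → MvPolynomial (Fin n) k) :
    ∃ X : Matrix (Fin (P.b 0)) ν (MvPolynomial (Fin n) k), ∀ c, (P.v ᵥ* X) c - y c ∈ I := by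
  choose x hx using fun c => P.haug (Ideal.Quotient.mk I (y c))
  refine ⟨Matrix.of fun r c => x c r, fun c => Ideal.Quotient.eq.1 ?_⟩
  simp only [Matrix.vecMul, dotProduct, Matrix.of_apply, mul_comm (P.v _)]
  exact hx c

end Exactness

/-- Families of linear maps from the modules of `P` to those of `Q`, as matrices. -/
abbrev LinearMaps (P Q : GradedFreeRes I) : Type _ :=
  ∀ i, Matrix (Fin (Q.b i)) (Fin (P.b i)) (MvPolynomial (Fin n) k)

/-- The matrices `φ i` form a chain map `P → Q` over the identity of `R / I`, not necessarily
homogeneous. -/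
structure IsComparisonMap (P Q : GradedFreeRes I) (φ : LinearMaps P Q) : Prop where
  comm : ∀ i, Q.A i * φ (i + 1) = φ i * P.A i
  aug : ∀ c, (Q.v ᵥ* φ 0) c - P.v c ∈ I

theorem exists_isComparisonMap (P Q : GradedFreeRes I) : ∃ φ, IsComparisonMap P Q φ := by
  obtain ⟨φ₀, hφ₀⟩ := Q.exists_vecMul_sub_mem P.v
  have hlift : ∃ Y, Q.A 0 * Y = φ₀ * P.A 0 := by
    refine Q.exists_A_zero_mul_eq fun c => ?_
    have hmem := I.add_mem (vecMul_mem (u := Q.v ᵥ* φ₀ - P.v) hφ₀ (P.A 0) c) (P.vecMul_A_zero_mem c)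
    rwa [Matrix.sub_vecMul, Pi.sub_apply, sub_add_cancel, Matrix.vecMul_vecMul] at hmem
  have step (i) (φ : Matrix (Fin (Q.b i)) (Fin (P.b i)) (MvPolynomial (Fin n) k))
      (hφ : ∃ Y : Matrix (Fin (Q.b (i + 1))) (Fin (P.b (i + 1))) (MvPolynomial (Fin n) k),
        Q.A i * Y = φ * P.A i) :
      ∃ φ' : Matrix (Fin (Q.b (i + 1))) (Fin (P.b (i + 1))) (MvPolynomial (Fin n) k),
        (∃ Y : Matrix (Fin (Q.b (i + 1 + 1))) (Fin (P.b (i + 1 + 1))) (MvPolynomial (Fin n) k),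
          Q.A (i + 1) * Y = φ' * P.A (i + 1)) ∧ Q.A i * φ' = φ * P.A i := by
    obtain ⟨φ', hφ'⟩ := hφ
    refine ⟨φ', Q.exists_A_succ_mul_eq ?_, hφ'⟩
    rw [← Matrix.mul_assoc, hφ', Matrix.mul_assoc, P.A_mul_A, Matrix.mul_zero]
  obtain ⟨φ, rfl, hφ⟩ := exists_dependent_seq step hlift
  exact ⟨φ, hφ, hφ₀⟩

theorem isComparisonMap_one (P : GradedFreeRes I) : IsComparisonMap P P fun _ => 1 where
  comm i := by rw [Matrix.mul_one, Matrix.one_mul]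
  aug c := by simp

namespace IsComparisonMap

variable {P Q S : GradedFreeRes I}

theorem comp {ψ : LinearMaps Q S} {φ : LinearMaps P Q}
    (hψ : IsComparisonMap Q S ψ) (hφ : IsComparisonMap P Q φ) :
    IsComparisonMap P S fun i => ψ i * φ i where
  comm i := by
    rw [← Matrix.mul_assoc, hψ.comm, Matrix.mul_assoc, hφ.comm, Matrix.mul_assoc]
  aug c := by
    have hmem := I.add_mem (vecMul_mem (u := S.v ᵥ* ψ 0 - Q.v) hψ.aug (φ 0) c) (hφ.aug c)
    rwa [Matrix.sub_vecMul, Pi.sub_apply, sub_add_sub_cancel, Matrix.vecMul_vecMul] at hmem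

variable {φ φ' : LinearMaps P Q}

theorem degreePart (hI : IsHomogeneousIdeal I) (hφ : IsComparisonMap P Q φ) :
    IsComparisonMap P Q fun i => degreePart 1 (Q.D i) (P.D i) (φ i) where
  comm i := by
    rw [mul_degreePart fun r s => (Q.hA i r s).isWeightedHomogeneous, hφ.comm,
      degreePart_mul fun r s => (P.hA i r s).isWeightedHomogeneous]
  aug c := by
    have hv (r) : IsWeightedHomogeneous (1 : Fin n → ℤ) (Q.v r) (Q.D 0 r - 0) := by
      simpa using (Q.hv r).isWeightedHomogeneous
    rw [vecMul_degreePart hv, sub_zero,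
      ← (P.hv c).isWeightedHomogeneous.weightedHomogeneousComponent_same, ← map_sub]
    exact hI.weightedHomogeneousComponent_mem (hφ.aug c) _

theorem exists_homotopy (hφ : IsComparisonMap P Q φ) (hφ' : IsComparisonMap P Q φ') :
    ∃ h : ∀ i, Matrix (Fin (Q.b (i + 1))) (Fin (P.b i)) (MvPolynomial (Fin n) k),
      φ 0 - φ' 0 = Q.A 0 * h 0 ∧
        ∀ i, φ (i + 1) - φ' (i + 1) = Q.A (i + 1) * h (i + 1) + h i * P.A i := by
  have hcomm (i) : Q.A i * (φ (i + 1) - φ' (i + 1)) = (φ i - φ' i) * P.A i := by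
    rw [Matrix.mul_sub, Matrix.sub_mul, hφ.comm, hφ'.comm]
  obtain ⟨h₀, hh₀⟩ : ∃ h₀ : Matrix (Fin (Q.b 1)) (Fin (P.b 0)) (MvPolynomial (Fin n) k),
      Q.A 0 * h₀ = φ 0 - φ' 0 := by
    refine Q.exists_A_zero_mul_eq fun c => ?_
    simpa [Matrix.vecMul_sub] using I.sub_mem (hφ.aug c) (hφ'.aug c)
  have step (i) (h : Matrix (Fin (Q.b (i + 1))) (Fin (P.b i)) (MvPolynomial (Fin n) k))
      (hh : Q.A i * h * P.A i = (φ i - φ' i) * P.A i) :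
      ∃ h' : Matrix (Fin (Q.b (i + 1 + 1))) (Fin (P.b (i + 1))) (MvPolynomial (Fin n) k),
        Q.A (i + 1) * h' * P.A (i + 1) = (φ (i + 1) - φ' (i + 1)) * P.A (i + 1) ∧
        φ (i + 1) - φ' (i + 1) = Q.A (i + 1) * h' + h * P.A i := by
    obtain ⟨h', hh'⟩ := Q.exists_A_succ_mul_eq (X := φ (i + 1) - φ' (i + 1) - h * P.A i) (by
      rw [Matrix.mul_sub, hcomm, ← hh, Matrix.mul_assoc, sub_self])
    refine ⟨h', ?_, by rw [hh', sub_add_cancel]⟩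
    rw [hh', Matrix.sub_mul, Matrix.mul_assoc h, P.A_mul_A, Matrix.mul_zero, sub_zero]
  obtain ⟨h, rfl, hh⟩ := exists_dependent_seq step (a₀ := h₀) (by rw [hh₀])
  exact ⟨h, hh₀.symm, hh⟩

end IsComparisonMap

/-- A resolution is minimal when no entry of its differentials has a constant term. -/
def IsMinimal (P : GradedFreeRes I) : Prop :=
  ∀ i, (P.A i).map constantCoeff = 0

theorem IsMinimal.map_constantCoeff_eq {P Q : GradedFreeRes I} (hP : P.IsMinimal)
    (hQ : Q.IsMinimal) {φ φ' : LinearMaps P Q}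
    (hφ : IsComparisonMap P Q φ) (hφ' : IsComparisonMap P Q φ') (i : ℕ) :
    (φ i).map constantCoeff = (φ' i).map constantCoeff := by
  obtain ⟨h, h_zero, h_succ⟩ := hφ.exists_homotopy hφ'
  rw [← sub_eq_zero, ← Matrix.map_sub _ (map_sub _)]
  cases i with
  | zero => rw [h_zero, Matrix.map_mul, hQ, Matrix.zero_mul]
  | succ i =>
    rw [h_succ, Matrix.map_add _ (map_add _), Matrix.map_mul, Matrix.map_mul, hQ, hP,
      Matrix.zero_mul, Matrix.mul_zero, add_zero]

theorem IsMinimal.exists_D_eq (hI : IsHomogeneousIdeal I) {P : GradedFreeRes I}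
    (hP : P.IsMinimal) (Q : GradedFreeRes I) (i : ℕ) (c : Fin (P.b i)) :
    ∃ t, Q.D i t = P.D i c := by
  obtain ⟨φ, hφ⟩ := exists_isComparisonMap P Q
  obtain ⟨ψ, hψ⟩ := exists_isComparisonMap Q P
  have hone := hP.map_constantCoeff_eq hP (hψ.comp (hφ.degreePart hI)) P.isComparisonMap_one i
  have hne : ((ψ i).map constantCoeff *
      (degreePart 1 (Q.D i) (P.D i) (φ i)).map constantCoeff) c c ≠ 0 := by
    rw [← Matrix.map_mul, hone]
    simp
  obtain ⟨t, -, ht⟩ := exists_ne_zero_of_mul_ne_zero hne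
  exact ⟨t, eq_of_constantCoeff_degreePart_ne_zero ht⟩

/-- The resolution `P` witnesses `reg R / I ≤ r`. -/
def IsRegularityBound (P : GradedFreeRes I) (r : ℤ) : Prop :=
  ∀ i (j : Fin (P.b i)), P.D i j - i ≤ r

theorem exists_isRegularityBound (P : GradedFreeRes I) : ∃ r, P.IsRegularityBound r := by
  obtain ⟨r, hr⟩ := (Set.finite_range fun x : Σ i : Fin (P.len + 1), Fin (P.b i) =>
    P.D x.1 x.2 - (x.1 : ℤ)).bddAbove
  refine ⟨r, fun i j => ?_⟩
  by_cases hi : P.len < i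
  · exact (Fin.cast (P.hb i hi) j).elim0
  · exact hr ⟨⟨⟨i, by lia⟩, j⟩, rfl⟩

theorem IsRegularityBound.nonneg (hI : I ≠ ⊤) {P : GradedFreeRes I} {r : ℤ}
    (hr : P.IsRegularityBound r) : 0 ≤ r := by
  obtain ⟨c, hc⟩ : ∃ c, P.v c ≠ 0 := by
    by_contra! hv
    obtain ⟨w, hw⟩ := P.haug 1
    refine hI ((Ideal.eq_top_iff_one I).2 (Ideal.Quotient.eq_zero_iff_mem.1 ?_))
    simpa [hv] using hw.symm
  obtain ⟨m, hm, -⟩ := (P.hv c).resolve_left hc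
  have h := hr 0 c
  lia

theorem IsRegularityBound.of_isMinimal (hI : IsHomogeneousIdeal I) {P Q : GradedFreeRes I}
    (hP : P.IsMinimal) {r : ℤ} (hr : Q.IsRegularityBound r) : P.IsRegularityBound r := by
  intro i c
  obtain ⟨t, ht⟩ := hP.exists_D_eq hI Q i c
  exact ht ▸ hr i t

/-- The zero complex, which resolves `R / R`. -/
noncomputable def zero : GradedFreeRes (⊤ : Ideal (MvPolynomial (Fin n) k)) where
  len := 0
  b _ := 0
  hb _ _ := rfl
  D _ := Fin.elim0
  A _ := 0
  v := Fin.elim0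
  hv r := r.elim0
  hA _ r := r.elim0
  haug y := ⟨0, Subsingleton.elim (h := Ideal.Quotient.subsingleton_iff.2 rfl) _ _⟩
  hex0 w := by simp [Subsingleton.elim w 0]
  hex _ w := by simp [Subsingleton.elim w 0]

end GradedFreeRes

section Regularity

variable {k : Type*} [Field k] {n : ℕ} {I J : Ideal (MvPolynomial (Fin n) k)}

-- The zero complex is bounded by every integer, so this is the junk value `sInf univ = 0`.
theorem regQuot_top : regQuot (⊤ : Ideal (MvPolynomial (Fin n) k)) = 0 := by
  refine Int.csInf_of_not_bddBelow fun ⟨r, hr⟩ => ?_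
  have hle : r ≤ r - 1 := hr ⟨GradedFreeRes.zero, fun _ j => j.elim0⟩
  lia

theorem regQuot_nonneg (I : Ideal (MvPolynomial (Fin n) k)) : 0 ≤ regQuot I := by
  by_cases hI : I = ⊤
  · rw [hI, regQuot_top]
  · obtain h | h := {r | ∃ F : GradedFreeRes I, F.IsRegularityBound r}.eq_empty_or_nonempty
    · exact ((congrArg sInf h).trans Int.csInf_empty).ge
    · exact le_csInf h fun _ ⟨_, hF⟩ => GradedFreeRes.IsRegularityBound.nonneg hI hF

theorem regQuot_le_regQuot (hJ : J ≠ ⊤) (F : GradedFreeRes I)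
    (hIJ : ∀ (Q : GradedFreeRes I) (r : ℤ), Q.IsRegularityBound r →
      ∃ P : GradedFreeRes J, P.IsRegularityBound r) :
    regQuot J ≤ regQuot I :=
  have ⟨r, hr⟩ := F.exists_isRegularityBound
  csInf_le_csInf ⟨0, fun _ ⟨_, hP⟩ => GradedFreeRes.IsRegularityBound.nonneg hJ hP⟩ ⟨r, F, hr⟩
    fun r ⟨Q, hQ⟩ => hIJ Q r hQ

end Regularity

namespace MultigradedFrame

variable {k : Type*} [Field k] {n : ℕ} {U : UpperSet (Fin n →₀ ℕ)}

theorem isMinimal_resolution {F : MultigradedFrame k U}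
    (hF : ∀ p q, F.mdeg p = F.mdeg q → F.diff p q = 0) : F.resolution.IsMinimal := by
  intro i
  ext r c
  by_contra h
  change constantCoeff (F.homogDiff (F.enum i r) (F.enum (i + 1) c)) ≠ 0 at h
  obtain ⟨h_tsub, h_diff⟩ : F.mdeg (F.enum (i + 1) c) - F.mdeg (F.enum i r) = 0 ∧
      F.diff (F.enum i r) (F.enum (i + 1) c) ≠ 0 := by
    classical
    simpa [homogDiff, constantCoeff_eq, coeff_monomial] using h
  exact h_diff (hF _ _ (le_antisymm (F.mdeg_le_of_diff_ne_zero h_diff)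
    (tsub_eq_zero_iff_le.1 h_tsub)))

theorem isRegularityBound_resolution_colon {F : MultigradedFrame k U} {r : ℤ}
    (hF : F.resolution.IsRegularityBound r) (m : Fin n →₀ ℕ) :
    (F.colon m).resolution.IsRegularityBound r := by
  refine (F.colon m).forall_resolution_D (P := fun i d => d - i ≤ r) |>.2 fun j => ?_
  have hle : (F.mdeg j - m).degree ≤ (F.mdeg j).degree := Finsupp.degree_mono tsub_le_self
  have hj := F.forall_resolution_D (P := fun i d => d - i ≤ r) |>.1 hF j
  change ((F.mdeg j - m).degree : ℤ) - F.hdeg j ≤ r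
  lia

end MultigradedFrame

theorem IsMonomialIdeal.exists_eq_monomialIdeal {k : Type*} [Field k] {n : ℕ}
    {I : Ideal (MvPolynomial (Fin n) k)} (hI : IsMonomialIdeal I) :
    ∃ G : Finset (Fin n →₀ ℕ), I = monomialIdeal k (upperClosure (G : Set (Fin n →₀ ℕ))) := by
  obtain ⟨T, rfl⟩ := hI
  classical
  obtain ⟨S, hST, hS⟩ := Submodule.fg_span_iff_fg_span_finset_subset _ |>.1
    (IsNoetherian.noetherian (Ideal.span ((fun m => monomial m (1 : k)) '' T)))
  obtain ⟨G, -, rfl⟩ := Finset.subset_set_image_iff.1 hST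
  refine ⟨G, Ideal.ext fun p => ?_⟩
  rw [Ideal.span, hS, Finset.coe_image, ← Ideal.span, mem_ideal_span_monomial_image,
    mem_monomialIdeal]
  simp only [mem_support_iff, mem_upperClosure]

/-- **Lemma.** For a monomial ideal `I` and a monomial `f`,
`reg R/I ≥ reg R/(I:f)`. -/
theorem reg_colon_monomial_le_reg {k : Type*} [Field k] {n : ℕ}
    (I : Ideal (MvPolynomial (Fin n) k)) (hI : IsMonomialIdeal I)
    (f : MvPolynomial (Fin n) k) (hf : ∃ m : Fin n →₀ ℕ, f = monomial m (1 : k)) :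
    regQuot (I.colon (Ideal.span {f})) ≤ regQuot I := by
  obtain ⟨m, rfl⟩ := hf
  have hI_homog := hI.isHomogeneousIdeal
  obtain ⟨G, rfl⟩ := hI.exists_eq_monomialIdeal
  rw [monomialIdeal_colon_monomial]
  by_cases hJ : monomialIdeal k (colonExponents (upperClosure (G : Set (Fin n →₀ ℕ))) m) = ⊤
  · rw [hJ, regQuot_top]
    exact regQuot_nonneg _
  · have hU : 0 ∉ upperClosure (G : Set (Fin n →₀ ℕ)) := fun h =>
      hJ (monomialIdeal_eq_top_iff.2 (mem_colonExponents.2 (UpperSet.upper _ zero_le h)))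
    obtain ⟨F₀⟩ := MultigradedFrame.nonempty_upperClosure (k := k) G
    obtain ⟨F, hF⟩ := F₀.exists_minimal hU
    refine regQuot_le_regQuot hJ F.resolution fun Q r hQ => ⟨(F.colon m).resolution, ?_⟩
    exact F.isRegularityBound_resolution_colon
      (hQ.of_isMinimal hI_homog (F.isMinimal_resolution hF)) m
end

section
/- Let R = k[x_1,…,x_n] be a polynomial ring over a field k, let I ⊆ R be a monomial ideal, and let f ∈ R be any monomial. Then depth R/I ∈ {depth R/(I:f), depth R/(I,f)}. -/
open MvPolynomial

/-!
Multiplication by `f` gives an exact sequence `0 → R/(I:f) → R/I → R/(I,f) → 0`. If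
`depth R/(I:f) ≥ depth R/I`, the long exact sequence of `Ext(R/𝔪, -)` forces `depth R/I` to be one
of the two outer depths, so this inequality is all that is needed; removing the variables of `f`
one at a time, it suffices to have it when `f = x` is a variable.

For a variable it follows, again from the exact sequence, once cutting `R/I` by `x` is known to
lower the depth by at most one. Grade `R` by the exponent of `x`, so that `x` spans the irrelevant
ideal, and let `T` be the degree zero part of `𝔪`. An element of degree zero that is regular on
`R/I` remains regular on `R/(I,x)`, so one can induct on the depth as long as `T` contains a
regular element. If `R/I` has depth at least two, let `N` be the submodule of elements of `R/I`
killed by `T`. Since `𝔪 = T R + (x)`, the elements of a regular sequence `r, r'` act on `N` as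
multiples of `x`, from which one gets `N = x N`; hence `N = 0` by the graded Nakayama lemma, and
prime avoidance finds a regular element in `T`.
-/

section ExtDepth

open CategoryTheory Abelian

universe u

variable {R : Type u} [CommRing R] {J : Ideal R}

/-- `Extⁱ(R/J, M) = 0` for all `i < d`. By Rees' theorem this says `depth_J M ≥ d` when `R` is
noetherian and `M` is finite with `JM ≠ M`; phrased with `Ext` it can be chased through long exact
sequences. -/
def DepthGE (J : Ideal R) (d : ℕ) (M : Type u) [AddCommGroup M] [Module R M] : Prop :=
  ∀ i < d, Subsingleton (Ext (ModuleCat.of R (R ⧸ J)) (ModuleCat.of R M) i)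

variable {M : Type u} [AddCommGroup M] [Module R M] {d : ℕ}

theorem DepthGE.mono {e : ℕ} (hde : d ≤ e) (hM : DepthGE J e M) : DepthGE J d M :=
  fun i hi => hM i (hi.trans_le hde)

section ShortExact

variable {A B C : Type u} [AddCommGroup A] [Module R A] [AddCommGroup B] [Module R B]
  [AddCommGroup C] [Module R C] {f : A →ₗ[R] B} {g : B →ₗ[R] C}

theorem shortExact_of_exact (hfg : Function.Exact f g) (hf : Function.Injective f)
    (hg : Function.Surjective g) :
    (ModuleCat.shortComplexOfCompEqZero f g hfg.linearMap_comp_eq_zero).ShortExact :=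
  ModuleCat.shortComplex_shortExact _ hfg hf hg

theorem DepthGE.middle (hfg : Function.Exact f g) (hf : Function.Injective f)
    (hg : Function.Surjective g) (hA : DepthGE J d A) (hC : DepthGE J d C) : DepthGE J d B :=
  fun i hi => AddCommGrpCat.subsingleton_of_isZero <|
    (Ext.covariant_sequence_exact₂' _ (shortExact_of_exact hfg hf hg) i).isZero_of_both_zeros
      ((AddCommGrpCat.isZero_of_iff_subsingleton.mpr (hA i hi)).eq_zero_of_src _)
      ((AddCommGrpCat.isZero_of_iff_subsingleton.mpr (hC i hi)).eq_zero_of_tgt _)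

theorem DepthGE.right (hfg : Function.Exact f g) (hf : Function.Injective f)
    (hg : Function.Surjective g) (hA : DepthGE J (d + 1) A) (hB : DepthGE J d B) :
    DepthGE J d C :=
  fun i hi => AddCommGrpCat.subsingleton_of_isZero <|
    (Ext.covariant_sequence_exact₃' _ (shortExact_of_exact hfg hf hg) i (i + 1)
      rfl).isZero_of_both_zeros
      ((AddCommGrpCat.isZero_of_iff_subsingleton.mpr (hB i hi)).eq_zero_of_src _)
      ((AddCommGrpCat.isZero_of_iff_subsingleton.mpr (hA (i + 1) (by lia))).eq_zero_of_tgt _)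

theorem DepthGE.left (hfg : Function.Exact f g) (hf : Function.Injective f)
    (hg : Function.Surjective g) (hB : DepthGE J (d + 1) B) (hC : DepthGE J d C) :
    DepthGE J (d + 1) A
  | 0, hi => by
    have hS := shortExact_of_exact hfg hf hg
    have := hS.mono_f
    have := hB 0 hi
    exact (Ext.postcomp_mk₀_injective_of_mono (ModuleCat.of R (R ⧸ J))
      (ModuleCat.shortComplexOfCompEqZero f g _).f).subsingleton
  | i + 1, hi => AddCommGrpCat.subsingleton_of_isZero <|
    (Ext.covariant_sequence_exact₁' _ (shortExact_of_exact hfg hf hg) i (i + 1)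
      rfl).isZero_of_both_zeros
      ((AddCommGrpCat.isZero_of_iff_subsingleton.mpr (hC i (by lia))).eq_zero_of_src _)
      ((AddCommGrpCat.isZero_of_iff_subsingleton.mpr (hB (i + 1) hi)).eq_zero_of_tgt _)

end ShortExact

section Regular

variable {C : Type u} [AddCommGroup C] [Module R C] {r : R} {g : M →ₗ[R] C}

theorem DepthGE.of_isSMulRegular (hrJ : r ∈ J) (hr : IsSMulRegular M r)
    (hrg : Function.Exact (LinearMap.lsmul R M r) g) (hg : Function.Surjective g)
    (hC : DepthGE J d C) : DepthGE J (d + 1) M := by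
  have hann : r ∈ Module.annihilator R (R ⧸ J) := by rwa [Ideal.annihilator_quotient]
  rintro (_ | i) hi
  · have : Subsingleton ((R ⧸ J) →ₗ[R] M) :=
      hr.linearMap_subsingleton_of_mem_annihilator hann
    exact (Ext.addEquiv₀.trans ModuleCat.homAddEquiv).subsingleton
  · have := hC i (by lia)
    refine subsingleton_of_forall_eq 0 fun e => ?_
    -- `r` kills `Ext`, as it kills `R/J`, so `e` comes from `Extⁱ(R/J, C) = 0`.
    have hre := congrArg (fun φ => φ.hom e) (Ext.postcomp_smul_id_eq_zero_of_mem_annihilator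
      (M := ModuleCat.of R M) (N := ModuleCat.of R (R ⧸ J)) hann (i + 1))
    obtain ⟨e', rfl⟩ := Ext.covariant_sequence_exact₁ _ (shortExact_of_exact hrg hr hg) e hre rfl
    rw [Subsingleton.elim (α := Ext (ModuleCat.of R (R ⧸ J)) (ModuleCat.of R C) i) e' 0,
      Ext.zero_comp]

variable [IsNoetherianRing R] [Module.Finite R M]

theorem DepthGE.exists_isSMulRegular (hM : DepthGE J (d + 1) M) :
    ∃ r ∈ J, IsSMulRegular M r := by
  have := hM 0 d.succ_pos
  have : Subsingleton ((R ⧸ J) →ₗ[R] M) :=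
    (Ext.addEquiv₀.trans
      (ModuleCat.homAddEquiv (M := .of R (R ⧸ J)) (N := .of R M))).symm.subsingleton
  simpa [Ideal.annihilator_quotient] using IsSMulRegular.subsingleton_linearMap_iff.mp this

theorem exists_isRegular_iff_depthGE (hJM : J • (⊤ : Submodule R M) ≠ ⊤) :
    (∃ rs : List R, rs.length = d ∧ (∀ r ∈ rs, r ∈ J) ∧ RingTheory.Sequence.IsRegular M rs) ↔
      DepthGE J d M := by
  have hsupp : Module.support R (R ⧸ J) = PrimeSpectrum.zeroLocus J := by
    rw [Module.support_eq_zeroLocus, Ideal.annihilator_quotient]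
  refine ⟨?_, ModuleCat.exists_isRegular_of_exists_subsingleton_ext J d (ModuleCat.of R M)
    hJM.lt_top (ModuleCat.of R (R ⧸ J)) hsupp⟩
  rintro ⟨rs, rfl, hrs, hreg⟩
  exact ModuleCat.subsingleton_ext_of_exists_isRegular J (ModuleCat.of R (R ⧸ J))
    hsupp.subset (ModuleCat.of R M) hJM.lt_top rs hrs hreg

theorem idealDepth_eq_sSup_depthGE (hJM : J • (⊤ : Submodule R M) ≠ ⊤) :
    idealDepth J M = sSup {d | DepthGE J d M} := by
  simp only [idealDepth, exists_isRegular_iff_depthGE hJM]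

end Regular

theorem idealDepth_eq_or_eq_of_exact [IsNoetherianRing R]
    {A B C : Type u} [AddCommGroup A] [Module R A] [AddCommGroup B] [Module R B]
    [AddCommGroup C] [Module R C] [Module.Finite R A] [Module.Finite R B] [Module.Finite R C]
    {f : A →ₗ[R] B} {g : B →ₗ[R] C} (hfg : Function.Exact f g) (hf : Function.Injective f)
    (hg : Function.Surjective g) (hA : J • (⊤ : Submodule R A) ≠ ⊤)
    (hB : J • (⊤ : Submodule R B) ≠ ⊤) (hC : J • (⊤ : Submodule R C) ≠ ⊤)
    (hBA : ∀ d, DepthGE J d B → DepthGE J d A) :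
    idealDepth J B = idealDepth J A ∨ idealDepth J B = idealDepth J C := by
  simp only [idealDepth_eq_sSup_depthGE, hA, hB, hC, ne_eq, not_false_eq_true]
  by_cases hAB : ∀ d, DepthGE J d A → DepthGE J d B
  · exact .inl (congrArg sSup (Set.ext fun d => ⟨hBA d, hAB d⟩))
  push Not at hAB
  obtain ⟨e, heA, heB⟩ := hAB
  have lt_of_depthGE {d : ℕ} (hdB : DepthGE J d B) : d < e :=
    lt_of_not_ge fun hed => heB (hdB.mono hed)
  have lt_of_depthGE' {d : ℕ} (hdC : DepthGE J d C) : d < e :=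
    lt_of_not_ge fun hed => heB (heA.middle hfg hf hg (hdC.mono hed))
  exact .inr (congrArg sSup (Set.ext fun d =>
    ⟨fun hdB => (heA.mono (lt_of_depthGE hdB)).right hfg hf hg hdB,
      fun hdC => (heA.mono (lt_of_depthGE' hdC).le).middle hfg hf hg hdC⟩))

end ExtDepth

section ColonQuotient

variable {R : Type*} [CommRing R] (I : Ideal R) (f : R)

theorem ker_mkQ_comp_mulRight : (I.mkQ ∘ₗ LinearMap.mulRight R f).ker = I.colon {f} := by
  rw [LinearMap.ker_comp, Submodule.ker_mkQ]
  ext a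
  simp

/-- The injection `R/(I:f) → R/I` induced by multiplication by `f`. -/
def colonQuotientMap : (R ⧸ I.colon {f}) →ₗ[R] R ⧸ I :=
  Submodule.liftQ _ (I.mkQ ∘ₗ LinearMap.mulRight R f) (ker_mkQ_comp_mulRight I f).ge

theorem colonQuotientMap_injective : Function.Injective (colonQuotientMap I f) :=
  LinearMap.ker_eq_bot.mp (Submodule.ker_liftQ_eq_bot _ _ _ (ker_mkQ_comp_mulRight I f).le)

theorem exact_lsmul_factor :
    Function.Exact (LinearMap.lsmul R (R ⧸ I) f)
      (Submodule.factor (le_sup_left : I ≤ I ⊔ Ideal.span {f})) := by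
  refine (Submodule.mkQ_surjective I).forall.mpr fun a => ?_
  rw [Submodule.factor_mk, Submodule.mkQ_apply, Submodule.Quotient.mk_eq_zero, sup_comm,
    Ideal.mem_span_singleton_sup]
  constructor
  · rintro ⟨b, c, hc, rfl⟩
    exact ⟨I.mkQ b, (Submodule.Quotient.eq I).mpr (by simpa [mul_comm b] using hc)⟩
  · rintro ⟨b, hb⟩
    obtain ⟨b, rfl⟩ := I.mkQ_surjective b
    have hfb : f * b - a ∈ I := (Submodule.Quotient.eq I).mp hb
    exact ⟨b, a - f * b, neg_sub (f * b) a ▸ I.neg_mem hfb, by ring⟩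

theorem exact_colonQuotientMap_factor :
    Function.Exact (colonQuotientMap I f)
      (Submodule.factor (le_sup_left : I ≤ I ⊔ Ideal.span {f})) := by
  have hcomp : I.mkQ ∘ₗ LinearMap.mulRight R f = LinearMap.lsmul R (R ⧸ I) f ∘ₗ I.mkQ := by
    ext
    simp [Algebra.smul_def]
  rw [LinearMap.exact_iff, colonQuotientMap, Submodule.range_liftQ, hcomp,
    LinearMap.range_comp_of_range_eq_top _ I.range_mkQ]
  exact LinearMap.exact_iff.mp (exact_lsmul_factor I f)

theorem mem_colon_iff_forall_smul_mkQ_eq_zero {S : Set R} {a : R} :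
    a ∈ I.colon S ↔ ∀ s ∈ S, s • I.mkQ a = 0 := by
  rw [Submodule.mem_colon]
  refine forall₂_congr fun s _ => ?_
  rw [← map_smul, Submodule.mkQ_apply, Submodule.Quotient.mk_eq_zero, smul_eq_mul, smul_eq_mul,
    mul_comm]

theorem colon_singleton_one : I.colon {1} = I := by
  ext a
  simp

theorem colon_singleton_mul (g : R) : I.colon {g * f} = (I.colon {f}).colon {g} := by
  ext a
  simp [mul_assoc]

theorem smul_top_quotient_ne_top {I J : Ideal R} (h : I ⊔ J ≠ ⊤) :
    J • (⊤ : Submodule R (R ⧸ I)) ≠ ⊤ := by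
  intro htop
  apply h
  simpa [htop, sup_comm J] using
    (Submodule.comap_smul_top_of_surjective J I.mkQ I.mkQ_surjective).symm

end ColonQuotient

section Torsion

variable {R : Type*} [CommRing R] {M : Type*} [AddCommGroup M] [Module R M]

theorem exists_eq_smul_of_forall_smul_eq_zero {C : Type*} [AddCommGroup C] [Module R C]
    {T : Ideal R} {x r r' : R} {g : M →ₗ[R] C} (hr : IsSMulRegular M r)
    (hrg : Function.Exact (LinearMap.lsmul R M r) g) (hr' : IsSMulRegular C r')
    (hrT : r ∈ T ⊔ Ideal.span {x}) (hrT' : r' ∈ T ⊔ Ideal.span {x}) {u : M}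
    (hu : ∀ t ∈ T, t • u = 0) : ∃ v : M, (∀ t ∈ T, t • v = 0) ∧ u = x • v := by
  simp only [sup_comm T, Ideal.mem_span_singleton_sup] at hrT hrT'
  obtain ⟨s, y, hy, rfl⟩ := hrT
  obtain ⟨s', y', hy', rfl⟩ := hrT'
  have smul_eq {s y : R} (hy : y ∈ T) {w : M} (hw : ∀ t ∈ T, t • w = 0) :
      (s * x + y) • w = x • s • w := by
    rw [add_smul, hw y hy, add_zero, mul_comm, mul_smul]
  have hsu : ∀ t ∈ T, t • s • u = 0 := fun t ht => by rw [smul_comm, hu t ht, smul_zero]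
  -- `r' • s • u = s' • r • u` vanishes in `C`, where `r'` is regular, so `s • u` lies in `r • M`.
  obtain ⟨v, hv⟩ : ∃ v, (s * x + y) • v = s • u := by
    refine (hrg _).mp (hr'.right_eq_zero_of_smul ?_)
    rw [← map_smul, smul_eq hy' hsu, smul_comm x, ← smul_eq hy hu, smul_comm s']
    exact (hrg _).mpr ⟨s' • u, rfl⟩
  have hvT : ∀ t ∈ T, t • v = 0 := fun t ht =>
    hr.right_eq_zero_of_smul (by rw [smul_comm, hv, hsu t ht])
  refine ⟨v, hvT, hr ?_⟩
  change (s * x + y) • u = (s * x + y) • x • v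
  rw [smul_eq hy hu, ← hv, smul_comm]

theorem exists_isSMulRegular_algebraMap {S : Type*} [CommRing S] [Algebra S R]
    [IsNoetherianRing R] [Module.Finite R M] {T : Ideal S}
    (hT : ∀ u : M, (∀ t ∈ T.map (algebraMap S R), t • u = 0) → u = 0) :
    ∃ r ∈ T, IsSMulRegular M (algebraMap S R r) := by
  by_contra! hreg
  have hcover : (T : Set S) ⊆ ⋃ P ∈ associatedPrimes R M, P.comap (algebraMap S R) := by
    intro r hr
    have hmem : algebraMap S R r ∈ ⋃ P ∈ associatedPrimes R M, (P : Set R) :=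
      (biUnion_associatedPrimes_eq_compl_regular R M).ge (hreg r hr)
    simpa using hmem
  obtain ⟨P, hP, hTP⟩ := (Ideal.subset_union_prime_finite (associatedPrimes.finite R M) ⊥ ⊥
    fun P hP _ _ => hP.isPrime.comap (algebraMap S R)).mp hcover
  obtain ⟨hprime, u, rfl⟩ := isAssociatedPrime_iff.mp hP
  have hu : u = 0 := hT u fun t ht => by
    simpa using Ideal.map_le_iff_le_comap.mpr hTP ht
  exact hprime.ne_top (by simp [hu])

end Torsion

section Graded

open DirectSum HomogeneousIdeal

universe u

variable {R : Type u} {σ : Type*} [CommRing R] [SetLike σ R] [AddSubgroupClass σ R] {𝒜 : ℕ → σ}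
  [GradedRing 𝒜] {K : Ideal R}

theorem mem_sup_irrelevant_iff (hK : K.IsHomogeneous 𝒜) {a : R} :
    a ∈ K ⊔ 𝒜₊.toIdeal ↔ (decompose 𝒜 a 0 : R) ∈ K := by
  constructor
  · intro h
    obtain ⟨b, hb, c, hc, rfl⟩ := Submodule.mem_sup.mp h
    have hc0 : (decompose 𝒜 c 0 : R) = 0 := hc
    simpa [hc0] using hK 0 hb
  · intro h
    rw [← add_sub_cancel (decompose 𝒜 a 0 : R) a]
    refine Submodule.add_mem_sup h ?_
    simp

theorem le_map_comap_sup_irrelevant {J : Ideal R} (hJ : 𝒜₊.toIdeal ≤ J) :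
    J ≤ (J.comap (algebraMap (𝒜 0) R)).map (algebraMap (𝒜 0) R) ⊔ 𝒜₊.toIdeal := by
  intro a ha
  have hdiff : a - decompose 𝒜 a 0 ∈ 𝒜₊.toIdeal := by simp
  rw [← add_sub_cancel (decompose 𝒜 a 0 : R) a]
  refine Submodule.add_mem_sup (Ideal.mem_map_of_mem (algebraMap (𝒜 0) R) ?_) hdiff
  simpa using J.sub_mem ha (hJ hdiff)

theorem le_of_le_sup_irrelevant_mul {N : Ideal R} (hK : K.IsHomogeneous 𝒜)
    (hN : N ≤ K ⊔ 𝒜₊.toIdeal * N) : N ≤ K := by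
  suffices ∀ j, ∀ u ∈ N, (decompose 𝒜 u j : R) ∈ K from
    fun u hu => hK.mem_iff.mpr fun j => this j u hu
  intro j
  induction j using Nat.strong_induction_on with | _ j ih
  intro u hu
  obtain ⟨a, ha, b, hb, rfl⟩ := Submodule.mem_sup.mp (hN hu)
  suffices (decompose 𝒜 b j : R) ∈ K by
    simpa using K.add_mem (hK j ha) this
  clear hu
  induction hb using Submodule.mul_induction_on' with
  | add v _ w _ hv hw => simpa using K.add_mem hv hw
  | mem_mul_mem y hy v hv =>
    have hy0 : decompose 𝒜 y 0 = 0 := Subtype.ext hy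
    rw [decompose_mul, coe_mul_apply_eq_sum_antidiagonal]
    refine K.sum_mem fun ⟨a, b⟩ hab => ?_
    have hab : a + b = j := Finset.HasAntidiagonal.mem_antidiagonal.mp hab
    rcases a.eq_zero_or_pos with rfl | hpos
    · simp [hy0]
    · exact K.mul_mem_left _ (ih b (by lia) v hv)

theorem isSMulRegular_quotient_sup_irrelevant (hK : K.IsHomogeneous 𝒜) {r : 𝒜 0}
    (hr : IsSMulRegular (R ⧸ K) (r : R)) :
    IsSMulRegular (R ⧸ K ⊔ 𝒜₊.toIdeal) (r : R) := by
  refine (isSMulRegular_quotient_iff_mem_of_smul_mem _ _).mpr fun a ha => ?_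
  rw [mem_sup_irrelevant_iff hK] at ha ⊢
  rw [smul_eq_mul, coe_decompose_mul_of_left_mem_zero 𝒜 r.2] at ha
  exact mem_of_isSMulRegular_quotient_of_smul_mem hr ha

variable {J : Ideal R} {x : R} {d : ℕ} [IsNoetherianRing R]

theorem colon_le_of_depthGE_two {T : Ideal R} (hx : x ∈ 𝒜₊) (hJ : J ≤ T ⊔ Ideal.span {x})
    (hK : K.IsHomogeneous 𝒜) (hJK : DepthGE J 2 (R ⧸ K)) :
    K.colon (T : Set R) ≤ K := by
  refine le_of_le_sup_irrelevant_mul hK fun u hu => ?_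
  obtain ⟨r, hrJ, hr⟩ := hJK.exists_isSMulRegular
  obtain ⟨r', hrJ', hr'⟩ := (hJK.right (exact_lsmul_factor K r) hr
    (Submodule.factor_surjective _) (hJK.mono one_le_two)).exists_isSMulRegular
  obtain ⟨v, hv, huv⟩ := exists_eq_smul_of_forall_smul_eq_zero hr (exact_lsmul_factor K r) hr'
    (hJ hrJ) (hJ hrJ') ((mem_colon_iff_forall_smul_mkQ_eq_zero K).mp hu)
  obtain ⟨v, rfl⟩ := K.mkQ_surjective v
  have huv : u - x * v ∈ K := (Submodule.Quotient.eq K).mp huv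
  rw [← sub_add_cancel u (x * v)]
  exact Submodule.add_mem_sup huv
    (Ideal.mul_mem_mul hx ((mem_colon_iff_forall_smul_mkQ_eq_zero K).mpr hv))

theorem exists_isSMulRegular_degree_zero (hx : 𝒜₊.toIdeal = Ideal.span {x})
    (hJ : 𝒜₊.toIdeal ≤ J) (hK : K.IsHomogeneous 𝒜) (hJK : DepthGE J 2 (R ⧸ K)) :
    ∃ r : 𝒜 0, (r : R) ∈ J ∧ IsSMulRegular (R ⧸ K) (r : R) := by
  have hxA : x ∈ 𝒜₊.toIdeal := hx ▸ Ideal.mem_span_singleton_self x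
  refine exists_isSMulRegular_algebraMap (T := J.comap (algebraMap (𝒜 0) R)) ?_
  refine K.mkQ_surjective.forall.mpr fun u hu => (Submodule.Quotient.mk_eq_zero K).mpr ?_
  exact colon_le_of_depthGE_two hxA (hx ▸ le_map_comap_sup_irrelevant hJ) hK hJK
    ((mem_colon_iff_forall_smul_mkQ_eq_zero K).mpr hu)

theorem DepthGE.quotient_sup_irrelevant (hx : 𝒜₊.toIdeal = Ideal.span {x})
    (hJ : 𝒜₊.toIdeal ≤ J) (hK : K.IsHomogeneous 𝒜) (hJK : DepthGE J (d + 1) (R ⧸ K)) :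
    DepthGE J d (R ⧸ K ⊔ 𝒜₊.toIdeal) := by
  induction d generalizing K with
  | zero => exact fun i hi => absurd hi i.not_lt_zero
  | succ d ih =>
    obtain ⟨r, hrJ, hr⟩ := exists_isSMulRegular_degree_zero hx hJ hK (hJK.mono (by lia))
    have hKr : (K ⊔ Ideal.span {(r : R)}).IsHomogeneous 𝒜 :=
      hK.sup (Ideal.homogeneous_span 𝒜 _ (by rintro _ rfl; exact ⟨0, r.2⟩))
    have hJKr : DepthGE J (d + 1) (R ⧸ K ⊔ Ideal.span {(r : R)}) :=
      hJK.right (exact_lsmul_factor K r) hr (Submodule.factor_surjective _) (hJK.mono (by lia))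
    refine DepthGE.of_isSMulRegular hrJ (isSMulRegular_quotient_sup_irrelevant hK hr)
      (exact_lsmul_factor _ _) (Submodule.factor_surjective _) ?_
    rw [sup_right_comm]
    exact ih hKr hJKr

theorem DepthGE.quotient_colon_singleton (hx : 𝒜₊.toIdeal = Ideal.span {x})
    (hJ : 𝒜₊.toIdeal ≤ J) (hK : K.IsHomogeneous 𝒜) :
    ∀ {d}, DepthGE J d (R ⧸ K) → DepthGE J d (R ⧸ K.colon {x})
  | 0, _ => fun i hi => absurd hi i.not_lt_zero
  | _ + 1, hJK => hJK.left (exact_colonQuotientMap_factor K x) (colonQuotientMap_injective K x)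
      (Submodule.factor_surjective _) (hx ▸ hJK.quotient_sup_irrelevant hx hJ hK)

end Graded

section Monomial

variable {σ k : Type*} [CommRing k]

variable (σ k) in
/-- The ideal generated by all the variables; `mxIdeal` is its case `σ = Fin n`. -/
noncomputable def variablesIdeal : Ideal (MvPolynomial σ k) :=
  Ideal.span (Set.range X)

/-- Homogeneity for the fine grading of `MvPolynomial σ k` by exponent vectors: the ideal contains
every term of each of its elements. Over a field these are exactly the monomial ideals. -/
def IsMultigraded (I : Ideal (MvPolynomial σ k)) : Prop :=
  ∀ p ∈ I, ∀ m, monomial m (coeff m p) ∈ I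

theorem isMultigraded_span_monomial (T : Set (σ →₀ ℕ)) :
    IsMultigraded (Ideal.span ((fun m => monomial m (1 : k)) '' T)) := by
  classical
  intro p hp m
  rw [mem_ideal_span_monomial_image] at hp ⊢
  intro l hl
  obtain rfl := Finset.mem_singleton.mp (support_monomial_subset hl)
  exact hp l (by simpa using hl)

variable {I : Ideal (MvPolynomial σ k)}

theorem IsMultigraded.colon_monomial (hI : IsMultigraded I) (s : σ →₀ ℕ) :
    IsMultigraded (I.colon {monomial s 1}) := by
  intro p hp m
  simp only [Submodule.mem_colon_singleton, smul_eq_mul] at hp ⊢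
  simpa [monomial_mul] using hI _ hp (m + s)

theorem IsMultigraded.sup_variablesIdeal_ne_top (hI : IsMultigraded I) (htop : I ≠ ⊤) :
    I ⊔ variablesIdeal σ k ≠ ⊤ := by
  intro h
  obtain ⟨a, ha, b, hb, hab⟩ := Submodule.mem_sup.mp ((Ideal.eq_top_iff_one _).mp h)
  have hb0 : coeff 0 b = 0 := by
    by_contra hb0
    rw [variablesIdeal, ← Set.image_univ, mem_ideal_span_X_image] at hb
    simpa using hb 0 (mem_support_iff.mpr hb0)
  have ha0 : coeff 0 a = 1 := by simpa [hb0] using congrArg (coeff 0) hab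
  exact htop ((Ideal.eq_top_iff_one I).mpr (by simpa [ha0] using hI a ha 0))

theorem monomial_mem_variablesIdeal {m : σ →₀ ℕ} (hm : m ≠ 0) (c : k) :
    monomial m c ∈ variablesIdeal σ k := by
  obtain ⟨i, hi⟩ := Finsupp.ne_iff.mp hm
  rw [variablesIdeal, ← Set.image_univ, mem_ideal_span_X_image]
  intro l hl
  obtain rfl := Finset.mem_singleton.mp (support_monomial_subset hl)
  exact ⟨i, Set.mem_univ i, hi⟩

section VariableGrading

attribute [local instance] weightedGradedAlgebra

open HomogeneousIdeal

theorem IsMultigraded.isHomogeneous (hI : IsMultigraded I) (w : σ → ℕ) :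
    I.IsHomogeneous (weightedHomogeneousSubmodule k w) := by
  intro n p hp
  change ((weightedDecomposition k w).decompose' p n : MvPolynomial σ k) ∈ I
  classical
  rw [weightedDecomposition.decompose'_apply, weightedHomogeneousComponent_apply]
  exact I.sum_mem fun m _ => hI p hp m

variable (i : σ)

theorem irrelevant_weightedHomogeneousSubmodule_single [DecidableEq σ] :
    (weightedHomogeneousSubmodule k (Pi.single i 1))₊.toIdeal = Ideal.span {X i} := by
  ext p
  change ((weightedDecomposition k (Pi.single i 1)).decompose' p 0 : MvPolynomial σ k) = 0 ↔ _
  have hweight (m : σ →₀ ℕ) : Finsupp.weight (Pi.single i 1) m = m i := by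
    simp +contextual [Finsupp.weight_apply, Finsupp.sum, Pi.single_apply, eq_comm]
  rw [weightedDecomposition.decompose'_apply, MvPolynomial.ext_iff, ← Set.image_singleton,
    mem_ideal_span_X_image]
  simp [coeff_weightedHomogeneousComponent, hweight, not_imp_not]

theorem DepthGE.colon_X [Finite σ] [IsNoetherianRing k] (hI : IsMultigraded I) {d : ℕ}
    (h : DepthGE (variablesIdeal σ k) d (MvPolynomial σ k ⧸ I)) :
    DepthGE (variablesIdeal σ k) d (MvPolynomial σ k ⧸ I.colon {X i}) := by
  classical
  have hX := irrelevant_weightedHomogeneousSubmodule_single (k := k) i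
  refine h.quotient_colon_singleton hX ?_ (hI.isHomogeneous _)
  exact hX.trans_le (Ideal.span_mono (by simp))

end VariableGrading

variable [Finite σ] [IsNoetherianRing k]

theorem DepthGE.colon_monomial (hI : IsMultigraded I) (m : σ →₀ ℕ) {d : ℕ}
    (hd : DepthGE (variablesIdeal σ k) d (MvPolynomial σ k ⧸ I)) :
    DepthGE (variablesIdeal σ k) d (MvPolynomial σ k ⧸ I.colon {monomial m 1}) := by
  induction m using Finsupp.induction_linear generalizing I with
  | zero => rwa [monomial_zero', C_1, colon_singleton_one]
  | add m l ihm ihl =>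
    rw [← one_mul (1 : k), ← monomial_mul, colon_singleton_mul]
    exact ihm (hI.colon_monomial l) (ihl hI hd)
  | single i n =>
    induction n with
    | zero => rwa [Finsupp.single_zero, monomial_zero', C_1, colon_singleton_one]
    | succ n ih =>
      rw [← X_pow_eq_monomial, pow_succ', colon_singleton_mul, X_pow_eq_monomial]
      exact ih.colon_X i (hI.colon_monomial _)

theorem depth_mem_colon_or_sum_monomial_general (hI : IsMultigraded I) (m : σ →₀ ℕ) :
    idealDepth (variablesIdeal σ k) (MvPolynomial σ k ⧸ I) =
        idealDepth (variablesIdeal σ k)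
          (MvPolynomial σ k ⧸ I.colon (Ideal.span {monomial m (1 : k)})) ∨
      idealDepth (variablesIdeal σ k) (MvPolynomial σ k ⧸ I) =
        idealDepth (variablesIdeal σ k)
          (MvPolynomial σ k ⧸ I ⊔ Ideal.span {monomial m (1 : k)}) := by
  rw [Ideal.colon_span]
  by_cases hmI : monomial m 1 ∈ I
  · rw [sup_eq_left.mpr ((Ideal.span_singleton_le_iff_mem I).mpr hmI)]
    exact .inr rfl
  rcases eq_or_ne m 0 with rfl | hm
  · rw [monomial_zero', C_1, colon_singleton_one]
    exact .inl rfl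
  have hcolon : I.colon {monomial m 1} ≠ ⊤ := by
    simpa [Submodule.colon_eq_top_iff_subset] using hmI
  have htop : I ≠ ⊤ := by
    rintro rfl
    exact hmI Submodule.mem_top
  have hItop := hI.sup_variablesIdeal_ne_top htop
  refine idealDepth_eq_or_eq_of_exact (exact_colonQuotientMap_factor I (monomial m 1))
    (colonQuotientMap_injective I _) (Submodule.factor_surjective _)
    (smul_top_quotient_ne_top ((hI.colon_monomial m).sup_variablesIdeal_ne_top hcolon))
    (smul_top_quotient_ne_top hItop) (smul_top_quotient_ne_top ?_)
    fun _ hd => hd.colon_monomial hI m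
  rwa [sup_assoc, sup_eq_right.mpr
    ((Ideal.span_singleton_le_iff_mem _).mpr (monomial_mem_variablesIdeal hm 1))]

end Monomial

/-- **Theorem.** For a monomial ideal `I` and a monomial `f`,
`depth R/I ∈ {depth R/(I:f), depth R/(I,f)}`. -/
theorem depth_mem_colon_or_sum_monomial {k : Type*} [Field k] {n : ℕ}
    (I : Ideal (MvPolynomial (Fin n) k)) (hI : IsMonomialIdeal I)
    (f : MvPolynomial (Fin n) k) (hf : ∃ m : Fin n →₀ ℕ, f = monomial m (1 : k)) :
    pdepth I = pdepth (I.colon (Ideal.span {f})) ∨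
      pdepth I = pdepth (I + Ideal.span {f}) := by
  obtain ⟨⟨T, rfl⟩, m, rfl⟩ := And.intro hI hf
  exact depth_mem_colon_or_sum_monomial_general (isMultigraded_span_monomial T) m
end
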